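/- Fix d ≥ 2 and C > 0. In the uniformly random d-regular graph on n vertices, the joint distribution of the numbers of cycles of each length ℓ ≤ C converges, as n → ∞, to a vector of independent Poisson random variables with means (d−1)^ℓ/(2ℓ). Consequently, for the random 2-regular graph, the limiting probability that for each ℓ in a finite set the graph contains (respectively, does not contain) a cycle of length ℓ is ∏(1 − e^{−1/(2ℓ)}) · ∏ e^{−1/(2ℓ)} over the respective index sets. -/

import Mathlib

open Filter Topology
open scoped BigOperators

/-- The set of `d`-regular graphs on `Fin n`. -/
def regularGraphs (d n : ℕ) : Set (SimpleGraph (Fin n)) :=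
  {G | ∀ v, (G.neighborSet v).ncard = d}

/-- The number of cycles of length `ℓ` in `G` (each cycle is traversed by `2ℓ`
injective cyclic sequences of adjacent vertices). -/
noncomputable def cycleCount {n : ℕ} (G : SimpleGraph (Fin n)) (ℓ : ℕ) : ℕ :=
  Set.ncard {f : ZMod ℓ → Fin n |
    Function.Injective f ∧ ∀ i : ZMod ℓ, G.Adj (f i) (f (i + 1))} / (2 * ℓ)

/-- The probability of the event `E` for a uniformly random `d`-regular graph on `Fin n`. -/
noncomputable def regularPr (d n : ℕ) (E : Set (SimpleGraph (Fin n))) : ℝ :=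
  (Set.ncard (regularGraphs d n ∩ E) : ℝ) / (Set.ncard (regularGraphs d n) : ℝ)


namespace RCP

/-- evaluate a finite combination of binomial coefficients -/
noncomputable def ev (c : ℕ →₀ ℝ) (x : ℕ) : ℝ := c.sum (fun r a => a * (x.choose r : ℝ))

/-- the Poisson expectation of such a combination -/
noncomputable def Lf (lam : ℝ) (c : ℕ →₀ ℝ) : ℝ :=
  c.sum (fun r a => a * (lam ^ r / (r.factorial : ℝ)))

lemma ev_add (c c' : ℕ →₀ ℝ) (x : ℕ) : ev (c + c') x = ev c x + ev c' x := by
  unfold ev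
  exact Finsupp.sum_add_index' (by simp) (by intros; ring)

lemma Lf_add (lam : ℝ) (c c' : ℕ →₀ ℝ) : Lf lam (c + c') = Lf lam c + Lf lam c' := by
  unfold Lf
  exact Finsupp.sum_add_index' (by simp) (by intros; ring)

lemma ev_single (r : ℕ) (a : ℝ) (x : ℕ) : ev (Finsupp.single r a) x = a * (x.choose r : ℝ) := by
  unfold ev
  exact Finsupp.sum_single_index (by simp)

lemma Lf_single (lam : ℝ) (r : ℕ) (a : ℝ) :
    Lf lam (Finsupp.single r a) = a * (lam ^ r / (r.factorial : ℝ)) := by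
  unfold Lf
  exact Finsupp.sum_single_index (by simp)

lemma ev_neg (c : ℕ →₀ ℝ) (x : ℕ) : ev (-c) x = - ev c x := by
  have := ev_add (-c) c x
  have h0 : ev (-c + c) x = 0 := by simp [ev]
  linarith

lemma Lf_neg (lam : ℝ) (c : ℕ →₀ ℝ) : Lf lam (-c) = - Lf lam c := by
  have := Lf_add lam (-c) c
  have h0 : Lf lam (-c + c) = 0 := by simp [Lf]
  linarith

lemma ev_sum {κ : Type*} (s : Finset κ) (c : κ → ℕ →₀ ℝ) (x : ℕ) :
    ev (∑ k ∈ s, c k) x = ∑ k ∈ s, ev (c k) x := by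
  classical
  induction s using Finset.induction_on with
  | empty => simp [ev]
  | insert a s ha ih => rw [Finset.sum_insert ha, Finset.sum_insert ha, ev_add, ih]

lemma Lf_sum {κ : Type*} (lam : ℝ) (s : Finset κ) (c : κ → ℕ →₀ ℝ) :
    Lf lam (∑ k ∈ s, c k) = ∑ k ∈ s, Lf lam (c k) := by
  classical
  induction s using Finset.induction_on with
  | empty => simp [Lf]
  | insert a s ha ih => rw [Finset.sum_insert ha, Finset.sum_insert ha, Lf_add, ih]

/-- `u` is well approximated by binomial combinations, with Poisson mean `mu`. -/
def Good (lam : ℝ) (u : ℕ → ℝ) (mu : ℝ) : Prop :=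
  (∀ x, |u x| ≤ 1) ∧ ∃ T R : ℕ → (ℕ →₀ ℝ), (∀ m x, |u x - ev (T m) x| ≤ ev (R m) x) ∧
    Tendsto (fun m => Lf lam (T m)) atTop (𝓝 mu) ∧ Tendsto (fun m => Lf lam (R m)) atTop (𝓝 0)

lemma prod_approx {ι : Type*} (s : Finset ι) (u T R : ι → ℝ) (hu : ∀ i, |u i| ≤ 1)
    (h : ∀ i, |u i - T i| ≤ R i) :
    |∏ i ∈ s, T i| ≤ ∏ i ∈ s, (1 + R i) ∧
    |∏ i ∈ s, u i - ∏ i ∈ s, T i| ≤ ∏ i ∈ s, (1 + R i) - 1 := by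
  classical
  have hT : ∀ i, |T i| ≤ 1 + R i := by
    intro i
    have h1 := abs_sub_abs_le_abs_sub (T i) (u i)
    rw [abs_sub_comm] at h1
    linarith [h i, hu i]
  have hA : ∀ s : Finset ι, |∏ i ∈ s, T i| ≤ ∏ i ∈ s, (1 + R i) := by
    intro s
    rw [Finset.abs_prod]
    exact Finset.prod_le_prod (fun i _ => abs_nonneg _) (fun i _ => hT i)
  refine ⟨hA s, ?_⟩
  induction s using Finset.induction_on with
  | empty => simp
  | insert a s ha ih =>
    rw [Finset.prod_insert ha, Finset.prod_insert ha, Finset.prod_insert ha]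
    have e : u a * ∏ i ∈ s, u i - T a * ∏ i ∈ s, T i
      = u a * (∏ i ∈ s, u i - ∏ i ∈ s, T i) + (u a - T a) * ∏ i ∈ s, T i := by ring
    rw [e]
    refine (abs_add_le _ _).trans ?_
    rw [abs_mul, abs_mul]
    have h1 : |u a| * |∏ i ∈ s, u i - ∏ i ∈ s, T i| ≤ 1 * (∏ i ∈ s, (1 + R i) - 1) :=
      mul_le_mul (hu a) ih (abs_nonneg _) zero_le_one
    have h2 : |u a - T a| * |∏ i ∈ s, T i| ≤ R a * ∏ i ∈ s, (1 + R i) :=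
      mul_le_mul (h a) (hA s) (abs_nonneg _) ((abs_nonneg _).trans (h a))
    linarith

/-- average of `f` over a finset -/
noncomputable def avg {Ω : Type*} (S : Finset Ω) (f : Ω → ℝ) : ℝ := (∑ w ∈ S, f w) / (S.card : ℝ)

lemma avg_mono {Ω : Type*} (S : Finset Ω) (f g : Ω → ℝ) (h : ∀ w, f w ≤ g w) :
    avg S f ≤ avg S g := by
  unfold avg
  gcongr
  exact h _

lemma avg_sub {Ω : Type*} (S : Finset Ω) (f g : Ω → ℝ) :
    avg S (fun w => f w - g w) = avg S f - avg S g := by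
  unfold avg
  rw [Finset.sum_sub_distrib, sub_div]

lemma abs_avg_le {Ω : Type*} (S : Finset Ω) (f : Ω → ℝ) :
    |avg S f| ≤ avg S (fun w => |f w|) := by
  unfold avg
  rw [abs_div, Nat.abs_cast]
  gcongr
  exact Finset.abs_sum_le_sum_abs _ _

lemma avg_sum {Ω κ : Type*} (S : Finset Ω) (t : Finset κ) (c : κ → ℝ) (f : κ → Ω → ℝ) :
    avg S (fun w => ∑ k ∈ t, c k * f k w) = ∑ k ∈ t, c k * avg S (f k) := by
  unfold avg
  rw [Finset.sum_comm, Finset.sum_div]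
  refine Finset.sum_congr rfl fun k _ => ?_
  rw [← Finset.mul_sum, mul_div_assoc]

section mom
variable {ι : Type*} [Fintype ι] (lam : ι → ℝ) {Ω : ℕ → Type*} (S : ∀ n, Finset (Ω n))
  (X : ∀ n, Ω n → ι → ℕ) (l : Filter ℕ)

lemma mom_poly
    (hm : ∀ r : ι → ℕ, Tendsto (fun n => avg (S n) (fun w => ∏ i, ((X n w i).choose (r i) : ℝ))) l
      (𝓝 (∏ i, (lam i ^ r i / ((r i).factorial : ℝ))))) (c : ι → ℕ →₀ ℝ) :
    Tendsto (fun n => avg (S n) (fun w => ∏ i, ev (c i) (X n w i))) l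
      (𝓝 (∏ i, Lf (lam i) (c i))) := by
  classical
  unfold ev Lf Finsupp.sum
  simp only [Finset.prod_univ_sum, Finset.prod_mul_distrib, avg_sum]
  refine tendsto_finsetSum _ fun r _ => ?_
  exact (hm r).const_mul _

lemma mom_good
    (hm : ∀ r : ι → ℕ, Tendsto (fun n => avg (S n) (fun w => ∏ i, ((X n w i).choose (r i) : ℝ))) l
      (𝓝 (∏ i, (lam i ^ r i / ((r i).factorial : ℝ)))))
    (u : ι → ℕ → ℝ) (mu : ι → ℝ) (hu : ∀ i, Good (lam i) (u i) (mu i)) :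
    Tendsto (fun n => avg (S n) (fun w => ∏ i, u i (X n w i))) l (𝓝 (∏ i, mu i)) := by
  choose hu1 T R hTR hT hR using hu
  have h1 : Tendsto (fun m => ∏ i, Lf (lam i) (T i m)) atTop (𝓝 (∏ i, mu i)) :=
    tendsto_finsetProd _ fun i _ => hT i
  have h2 : Tendsto (fun m => ∏ i, Lf (lam i) (Finsupp.single 0 1 + R i m) - 1) atTop (𝓝 0) := by
    have : Tendsto (fun m => ∏ i, Lf (lam i) (Finsupp.single 0 1 + R i m) - 1) atTop
        (𝓝 (∏ _i : ι, (1 + 0 : ℝ) - 1)) := by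
      refine Tendsto.sub_const ?_ _
      refine tendsto_finsetProd _ fun i _ => ?_
      simp only [Lf_add, Lf_single]
      simpa using (hR i).const_add 1
    simpa using this
  rw [Metric.tendsto_nhds]
  intro ε hε
  have e1 := (Metric.tendsto_nhds.1 h1) (ε / 4) (by positivity)
  have e2 := (Metric.tendsto_nhds.1 h2) (ε / 4) (by positivity)
  obtain ⟨m, hm1, hm2⟩ := (e1.and e2).exists
  have k1 := mom_poly lam S X l hm (fun i => T i m)
  have k2 := mom_poly lam S X l hm (fun i => Finsupp.single 0 1 + R i m)
  have k3 := mom_poly lam S X l hm (fun i => Finsupp.single 0 1)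
  have k3' : ∏ i, Lf (lam i) (Finsupp.single 0 1) = 1 := by simp [Lf_single]
  rw [k3'] at k3
  have k4 := k2.sub k3
  filter_upwards [(Metric.tendsto_nhds.1 k1) (ε / 4) (by positivity),
    (Metric.tendsto_nhds.1 k4) (ε / 4) (by positivity)] with n hn1 hn2
  have key : |avg (S n) (fun w => ∏ i, u i (X n w i)) -
      avg (S n) (fun w => ∏ i, ev (T i m) (X n w i))| ≤
      avg (S n) (fun w => ∏ i, ev (Finsupp.single 0 1 + R i m) (X n w i)) -
      avg (S n) (fun w => ∏ i, ev (Finsupp.single 0 1) (X n w i)) := by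
    rw [← avg_sub, ← avg_sub]
    refine (abs_avg_le _ _).trans (avg_mono _ _ _ fun w => ?_)
    have := (prod_approx Finset.univ (fun i => u i (X n w i)) (fun i => ev (T i m) (X n w i))
      (fun i => ev (R i m) (X n w i)) (fun i => hu1 i _) (fun i => hTR i m _)).2
    simpa [ev_add, ev_single] using this
  rw [Real.dist_eq] at *
  rw [abs_lt] at *
  rw [abs_le] at key
  constructor <;> linarith

end mom

lemma trunc_ineq (a J x : ℕ) :
    |(if x = a then (1 : ℝ) else 0) -
      ∑ j ∈ Finset.range (J + 1), (-1) ^ j * ((a + j).choose a : ℝ) * (x.choose (a + j) : ℝ)|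
      ≤ ((a + (J + 1)).choose a : ℝ) * (x.choose (a + (J + 1)) : ℝ) := by
  have hc : ∀ j, ((a + j).choose a : ℝ) * (x.choose (a + j) : ℝ)
      = (x.choose a : ℝ) * ((x - a).choose j : ℝ) := by
    intro j
    by_cases hj : a + j ≤ x
    · have := Nat.choose_mul (n := x) (k := a + j) (s := a) (by omega)
      rw [mul_comm]
      rw [Nat.add_sub_cancel_left] at this
      exact_mod_cast this
    · rw [Nat.choose_eq_zero_of_lt (by omega : x < a + j)]
      by_cases hx : x < a
      · rw [Nat.choose_eq_zero_of_lt hx]; simp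
      · rw [Nat.choose_eq_zero_of_lt (by omega : x - a < j)]; simp
  simp only [mul_assoc, hc]
  rcases lt_trichotomy x a with h | h | h
  · rw [Nat.choose_eq_zero_of_lt h]; simp [h.ne]
  · subst h
    simp [Finset.sum_range_succ']
  · obtain ⟨y, rfl⟩ := Nat.exists_eq_add_of_lt h
    have e : a + y + 1 - a = y + 1 := by omega
    rw [e]
    have hs : ∑ j ∈ Finset.range (J + 1), (-1 : ℝ) ^ j * (((a + y + 1).choose a : ℝ) *
        ((y + 1).choose j : ℝ)) = ((a + y + 1).choose a : ℝ) * ((-1) ^ J * (y.choose J : ℝ)) := by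
      have := Int.alternating_sum_range_choose_eq_choose (n := y) (m := J)
      have h2 : ∑ j ∈ Finset.range (J + 1), (-1 : ℝ) ^ j * ((y + 1).choose j : ℝ)
        = (-1) ^ J * (y.choose J : ℝ) := by exact_mod_cast this
      rw [← h2, Finset.mul_sum]
      refine Finset.sum_congr rfl fun j _ => by ring
    rw [hs, if_neg (by omega), zero_sub, abs_neg, abs_mul, abs_mul, abs_pow]
    simp only [abs_neg, abs_one, one_pow, one_mul, Nat.abs_cast]
    gcongr
    rw [Nat.choose_succ_succ]; omega

lemma good_indicator (lam : ℝ) (a : ℕ) :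
    Good lam (fun x => if x = a then 1 else 0)
      (Real.exp (-lam) * lam ^ a / (a.factorial : ℝ)) := by
  refine ⟨fun x => by dsimp only; split_ifs <;> simp, 
    fun J => ∑ j ∈ Finset.range (J + 1), Finsupp.single (a + j) ((-1) ^ j * ((a + j).choose a : ℝ)),
    fun J => Finsupp.single (a + (J + 1)) ((a + (J + 1)).choose a : ℝ), ?_, ?_, ?_⟩
  · intro J x
    simp only [ev_sum, ev_single]
    exact trunc_ineq a J x
  all_goals
    have hc : ∀ j : ℕ, ((a + j).choose a : ℝ) * (lam ^ (a + j) / ((a + j).factorial : ℝ))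
      = lam ^ a / (a.factorial : ℝ) * (lam ^ j / (j.factorial : ℝ)) := by
      intro j
      have h := Nat.add_choose_mul_factorial_mul_factorial a j
      have h' : ((a + j).choose a : ℝ) * (a.factorial : ℝ) * (j.factorial : ℝ)
          = ((a + j).factorial : ℝ) := by
        rw [← Nat.choose_symm_add] at h
        exact_mod_cast h
      have h3 : ((a + j).factorial : ℝ) ≠ 0 := by positivity
      have h4 : (a.factorial : ℝ) ≠ 0 := by positivity
      have h5 : (j.factorial : ℝ) ≠ 0 := by positivity
      field_simp
      rw [← h']
      ring
  · simp only [Lf_sum, Lf_single, mul_assoc, hc]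
    have h := NormedSpace.expSeries_div_hasSum_exp (𝔸 := ℝ) (-lam)
    rw [← Real.exp_eq_exp_ℝ] at h
    have h2 := (h.tendsto_sum_nat.comp (tendsto_add_atTop_nat 1)).const_mul
      (lam ^ a / (a.factorial : ℝ))
    refine (h2.congr ?_).trans (le_of_eq ?_)
    · intro J
      simp only [Function.comp]
      rw [Finset.mul_sum]
      refine Finset.sum_congr rfl fun j _ => ?_
      rw [neg_pow]; ring
    · congr 1; ring
  · simp only [Lf_single, hc]
    have h := (FloorSemiring.tendsto_pow_div_factorial_atTop lam).comp (tendsto_add_atTop_nat 1)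
    simpa using h.const_mul (lam ^ a / (a.factorial : ℝ))

lemma good_one (lam : ℝ) : Good lam (fun _ => 1) 1 := by
  refine ⟨by simp, fun _ => Finsupp.single 0 1, fun _ => 0, ?_, ?_, ?_⟩
  · intro m x; simp [ev]
  · simp [Lf_single]
  · simp [Lf]

lemma good_compl (lam : ℝ) (u : ℕ → ℝ) (mu : ℝ) (h0 : ∀ x, 0 ≤ u x) (h : Good lam u mu) :
    Good lam (fun x => 1 - u x) (1 - mu) := by
  obtain ⟨h1, T, R, h2, h3, h4⟩ := h
  refine ⟨?_, fun m => Finsupp.single 0 1 + -(T m), R, ?_, ?_, h4⟩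
  · intro x
    have := h1 x
    rw [abs_le] at *
    constructor <;> linarith [h0 x]
  · intro m x
    have := h2 m x
    rw [ev_add, ev_neg, ev_single]
    rw [abs_sub_comm] at this
    refine le_trans (le_of_eq ?_) this
    congr 1
    simp
    ring
  · simp only [Lf_add, Lf_neg, Lf_single]
    simpa [sub_eq_add_neg] using h3.const_sub 1

end RCP


namespace RCP
section switching
open scoped Classical

/-- finset of regular graphs -/
noncomputable def Rg (d n : ℕ) : Finset (SimpleGraph (Fin n)) :=
  (Set.toFinite (regularGraphs d n)).toFinset

/-- regular graphs containing the edges `H` -/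
noncomputable def RH (d n : ℕ) (H : Finset (Sym2 (Fin n))) : Finset (SimpleGraph (Fin n)) :=
  (Rg d n).filter (fun G => (H : Set (Sym2 (Fin n))) ⊆ G.edgeSet)

noncomputable def hdeg {n : ℕ} (H : Finset (Sym2 (Fin n))) (v : Fin n) : ℕ :=
  (H.filter (fun e => v ∈ e)).card

lemma mem_Rg {d n : ℕ} {G : SimpleGraph (Fin n)} :
    G ∈ Rg d n ↔ ∀ v, (G.neighborSet v).ncard = d := by
  simp [Rg, regularGraphs]

lemma mem_RH {d n : ℕ} {H : Finset (Sym2 (Fin n))} {G : SimpleGraph (Fin n)} :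
    G ∈ RH d n H ↔ G ∈ Rg d n ∧ ∀ e ∈ H, e ∈ G.edgeSet := by
  simp only [RH, Finset.mem_filter]
  rfl

/-- remove `uv, xy`, add `ux, vy` -/
def sw {n : ℕ} (G : SimpleGraph (Fin n)) (u v x y : Fin n) : SimpleGraph (Fin n) :=
  SimpleGraph.fromEdgeSet {e | (e ∈ G.edgeSet ∧ e ≠ s(u, v) ∧ e ≠ s(x, y)) ∨ e = s(u, x) ∨ e = s(v, y)}

lemma sw_adj {n : ℕ} (G : SimpleGraph (Fin n)) (u v x y a b : Fin n) :
    (sw G u v x y).Adj a b ↔ ((G.Adj a b ∧ s(a, b) ≠ s(u, v) ∧ s(a, b) ≠ s(x, y)) ∨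
      s(a, b) = s(u, x) ∨ s(a, b) = s(v, y)) ∧ a ≠ b := by
  simp [sw]

lemma sw_mem {n : ℕ} (G : SimpleGraph (Fin n)) (u v x y : Fin n) (hux : u ≠ x) (hvy : v ≠ y)
    (e : Sym2 (Fin n)) :
    e ∈ (sw G u v x y).edgeSet ↔ ((e ∈ G.edgeSet ∧ e ≠ s(u, v) ∧ e ≠ s(x, y)) ∨
      e = s(u, x) ∨ e = s(v, y)) := by
  induction e with
  | h a b =>
    rw [SimpleGraph.mem_edgeSet, sw_adj]
    constructor
    · exact fun h => h.1
    · intro h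
      refine ⟨h, ?_⟩
      rintro rfl
      simp only [SimpleGraph.mem_edgeSet, SimpleGraph.irrefl, false_and, false_or,
        Sym2.eq_iff] at h
      grind

lemma sw_nbr {n : ℕ} (G : SimpleGraph (Fin n)) (u v x y : Fin n) (huv : u ≠ v) (hux : u ≠ x)
    (huy : u ≠ y) (hvx : v ≠ x) (hvy : v ≠ y) (hxy : x ≠ y) (w : Fin n) :
    (sw G u v x y).neighborSet w =
      if w = u then insert x (G.neighborSet u \ {v})
      else if w = v then insert y (G.neighborSet v \ {u})
      else if w = x then insert u (G.neighborSet x \ {y})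
      else if w = y then insert v (G.neighborSet y \ {x})
      else G.neighborSet w := by
  ext z
  have := G.ne_of_adj (a := w) (b := z)
  split_ifs <;> simp only [SimpleGraph.mem_neighborSet, sw_adj, Set.mem_insert_iff, Set.mem_sdiff,
    Set.mem_singleton_iff, ne_eq, Sym2.eq_iff] <;> grind

lemma sw_reg {d n : ℕ} (G : SimpleGraph (Fin n)) (u v x y : Fin n) (huv : G.Adj u v)
    (hxy : G.Adj x y) (hux : ¬ G.Adj u x) (hvy : ¬ G.Adj v y) (hux' : u ≠ x) (hvy' : v ≠ y)
    (huy : u ≠ y) (hvx : v ≠ x) (hG : G ∈ Rg d n) : sw G u v x y ∈ Rg d n := by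
  rw [mem_Rg] at *
  intro w
  rw [sw_nbr G u v x y huv.ne hux' huy hvx hvy' hxy.ne]
  split_ifs
  · rw [Set.ncard_exchange (by simpa using hux) (by simpa using huv), hG]
  · rw [Set.ncard_exchange (by simpa using hvy) (by simpa using huv.symm), hG]
  · rw [Set.ncard_exchange (by simpa using fun h => hux (G.adj_symm h)) (by simpa using hxy), hG]
  · rw [Set.ncard_exchange (by simpa using fun h => hvy (G.adj_symm h)) (by simpa using hxy.symm), hG]
  · exact hG w

lemma sw_sw {n : ℕ} (G : SimpleGraph (Fin n)) (u v x y : Fin n) (huv : G.Adj u v)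
    (hxy : G.Adj x y) (hux : ¬ G.Adj u x) (hvy : ¬ G.Adj v y) (hux' : u ≠ x) (hvy' : v ≠ y)
    (huy : u ≠ y) (hvx : v ≠ x) : sw (sw G u v x y) u x v y = G := by
  rw [← SimpleGraph.edgeSet_inj]
  ext e
  rw [sw_mem _ _ _ _ _ huv.ne hxy.ne, sw_mem _ _ _ _ _ hux' hvy']
  rw [← SimpleGraph.mem_edgeSet] at huv hxy hux hvy
  have h1 : s(u, v) ≠ s(u, x) := fun h => hux (h ▸ huv)
  have h2 : s(u, v) ≠ s(v, y) := fun h => hvy (h ▸ huv)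
  have h3 : s(x, y) ≠ s(u, x) := fun h => hux (h ▸ hxy)
  have h4 : s(x, y) ≠ s(v, y) := fun h => hvy (h ▸ hxy)
  constructor
  · rintro (⟨(h | h | h), h5, h6⟩ | h | h)
    · exact h.1
    · exact absurd h h5
    · exact absurd h h6
    · exact h ▸ huv
    · exact h ▸ hxy
  · intro h
    by_cases k1 : e = s(u, v)
    · exact Or.inr (Or.inl k1)
    by_cases k2 : e = s(x, y)
    · exact Or.inr (Or.inr k2)
    refine Or.inl ⟨Or.inl ⟨h, k1, k2⟩, ?_, ?_⟩
    · rintro rfl; exact hux h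
    · rintro rfl; exact hvy h

variable {d n : ℕ}

/-- first side of the switching -/
noncomputable def S1 (d : ℕ) (H : Finset (Sym2 (Fin n))) (u v : Fin n) :
    Finset (SimpleGraph (Fin n) × (Fin n × Fin n)) :=
  (RH d n (insert s(u, v) H) ×ˢ Finset.univ).filter (fun p => p.1.Adj p.2.1 p.2.2 ∧
    s(p.2.1, p.2.2) ∉ H ∧ u ≠ p.2.1 ∧ u ≠ p.2.2 ∧ v ≠ p.2.1 ∧ v ≠ p.2.2 ∧
    ¬ p.1.Adj u p.2.1 ∧ ¬ p.1.Adj v p.2.2)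

/-- second side of the switching -/
noncomputable def S2 (d : ℕ) (H : Finset (Sym2 (Fin n))) (u v : Fin n) :
    Finset (SimpleGraph (Fin n) × (Fin n × Fin n)) :=
  (RH d n H ×ˢ Finset.univ).filter (fun p => ¬ p.1.Adj u v ∧ p.1.Adj u p.2.1 ∧ p.1.Adj v p.2.2 ∧
    s(u, p.2.1) ∉ H ∧ s(v, p.2.2) ∉ H ∧ ¬ p.1.Adj p.2.1 p.2.2 ∧ p.2.1 ≠ p.2.2)

lemma card_S1_eq (H : Finset (Sym2 (Fin n))) (u v : Fin n) (huv : u ≠ v) (hH : s(u, v) ∉ H) :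
    (S1 d H u v).card = (S2 d H u v).card := by
  refine Finset.card_nbij' (fun p => (sw p.1 u v p.2.1 p.2.2, p.2))
    (fun p => (sw p.1 u p.2.1 v p.2.2, p.2)) ?_ ?_ ?_ ?_
  · rintro ⟨G, x, y⟩ h
    simp only [S1, S2, Finset.coe_filter, Set.mem_ofPred_eq, Finset.mem_product, mem_RH,
      Finset.mem_univ, and_true, Finset.mem_insert, forall_eq_or_imp,
      SimpleGraph.mem_edgeSet] at h ⊢
    obtain ⟨⟨hG, h1, h2⟩, h3, h4, h5, h6, h7, h8, h9, h10⟩ := h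
    refine ⟨⟨sw_reg G u v x y h1 h3 h9 h10 h5 h8 h6 h7 hG, ?_⟩, ?_, ?_, ?_, ?_, ?_, ?_, h3.ne⟩
    · intro e he
      rw [sw_mem _ _ _ _ _ h5 h8]
      refine Or.inl ⟨h2 e he, ?_, ?_⟩
      · rintro rfl; exact hH he
      · rintro rfl; exact h4 he
    · rw [sw_adj]; simp only [Sym2.eq_iff]; grind
    · rw [sw_adj]; simp only [Sym2.eq_iff]; grind
    · rw [sw_adj]; simp only [Sym2.eq_iff]; grind
    · exact fun h => h9 (h2 _ h)
    · exact fun h => h10 (h2 _ h)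
    · rw [sw_adj]; simp only [Sym2.eq_iff]; grind
  · rintro ⟨G, x, y⟩ h
    simp only [S1, S2, Finset.coe_filter, Set.mem_ofPred_eq, Finset.mem_product, mem_RH,
      Finset.mem_univ, and_true, Finset.mem_insert, forall_eq_or_imp,
      SimpleGraph.mem_edgeSet] at h ⊢
    obtain ⟨⟨hG, h2⟩, h3, h4, h5, h6, h7, h8, h9⟩ := h
    have hxv : x ≠ v := by rintro rfl; exact h3 h4
    have huy : u ≠ y := by rintro rfl; exact h3 h5.symm
    refine ⟨⟨sw_reg G u x v y h4 h5 h3 h8 huv h9 huy hxv hG, ?_, ?_⟩, ?_, ?_, h4.ne, huy,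
      hxv.symm, h5.ne, ?_, ?_⟩
    · rw [sw_adj]; simp only [Sym2.eq_iff]; grind
    · intro e he
      rw [sw_mem _ _ _ _ _ huv h9]
      refine Or.inl ⟨h2 e he, ?_, ?_⟩
      · rintro rfl; exact h6 he
      · rintro rfl; exact h7 he
    · rw [sw_adj]; simp only [Sym2.eq_iff]; grind
    · exact fun h => h8 (h2 _ h)
    · rw [sw_adj]; have := h4.ne; simp only [Sym2.eq_iff]; grind
    · rw [sw_adj]; have := h5.ne; simp only [Sym2.eq_iff]; grind
  · rintro ⟨G, x, y⟩ h
    simp only [S1, Finset.coe_filter, Set.mem_ofPred_eq, Finset.mem_product, mem_RH,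
      Finset.mem_univ, and_true, Finset.mem_insert, forall_eq_or_imp,
      SimpleGraph.mem_edgeSet] at h ⊢
    obtain ⟨⟨hG, h1, h2⟩, h3, h4, h5, h6, h7, h8, h9, h10⟩ := h
    rw [sw_sw G u v x y h1 h3 h9 h10 h5 h8 h6 h7]
  · rintro ⟨G, x, y⟩ h
    simp only [S2, Finset.coe_filter, Set.mem_ofPred_eq, Finset.mem_product, mem_RH,
      Finset.mem_univ, and_true, Finset.mem_insert, forall_eq_or_imp,
      SimpleGraph.mem_edgeSet] at h ⊢
    obtain ⟨⟨hG, h2⟩, h3, h4, h5, h6, h7, h8, h9⟩ := h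
    have hxv : x ≠ v := by rintro rfl; exact h3 h4
    have huy : u ≠ y := by rintro rfl; exact h3 h5.symm
    rw [sw_sw G u x v y h4 h5 h3 h8 huv h9 huy hxv]

end switching
end RCP


namespace RCP
section switching2
open scoped Classical
variable {d n : ℕ}

lemma card_prod_filter {α β : Type*} (A : Finset α) (B : Finset β) (P : α × β → Prop)
    [DecidablePred P] :
    ((A ×ˢ B).filter P).card = ∑ a ∈ A, (B.filter (fun b => P (a, b))).card := by
  simp only [Finset.card_filter, Finset.sum_product]

lemma card_prod_filter' {α β : Type*} (A : Finset α) (B : Finset β) (P : α × β → Prop)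
    [DecidablePred P] :
    ((A ×ˢ B).filter P).card = ∑ b ∈ B, (A.filter (fun a => P (a, b))).card := by
  simp only [Finset.card_filter, Finset.sum_product_right]

lemma nbr_card {G : SimpleGraph (Fin n)} (hG : G ∈ Rg d n) (v : Fin n) :
    (Finset.univ.filter (fun w => G.Adj v w)).card = d := by
  rw [mem_Rg] at hG
  rw [← hG v, ← Set.ncard_coe_finset]
  congr 1
  ext w; simp

lemma card_pairs {G : SimpleGraph (Fin n)} (hG : G ∈ Rg d n) (A : Finset (Fin n)) :
    (Finset.univ.filter (fun q : Fin n × Fin n => G.Adj q.1 q.2 ∧ q.1 ∈ A)).card = A.card * d := by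
  rw [← Finset.univ_product_univ]
  rw [card_prod_filter]
  have : ∀ a : Fin n, (Finset.univ.filter (fun b => G.Adj a b ∧ a ∈ A)).card
      = if a ∈ A then d else 0 := by
    intro a
    split_ifs with h
    · simp [h, nbr_card hG]
    · simp [h]
  simp only [this]
  rw [← Finset.sum_filter]
  simp

lemma card_pairs' {G : SimpleGraph (Fin n)} (hG : G ∈ Rg d n) (A : Finset (Fin n)) :
    (Finset.univ.filter (fun q : Fin n × Fin n => G.Adj q.1 q.2 ∧ q.2 ∈ A)).card = A.card * d := by
  rw [← Finset.univ_product_univ]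
  rw [card_prod_filter']
  have : ∀ a : Fin n, (Finset.univ.filter (fun b => G.Adj b a ∧ a ∈ A)).card
      = if a ∈ A then d else 0 := by
    intro a
    split_ifs with h
    · simp [h, G.adj_comm, nbr_card hG]
    · simp [h]
  simp only [this]
  rw [← Finset.sum_filter]
  simp

lemma card_sym2_fiber (H : Finset (Sym2 (Fin n))) :
    (Finset.univ.filter (fun q : Fin n × Fin n => s(q.1, q.2) ∈ H)).card ≤ 2 * H.card := by
  refine Finset.card_le_mul_card_image_of_maps_to (f := fun q : Fin n × Fin n => s(q.1, q.2))
    (by intro q; simp) 2 ?_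
  intro e _
  induction e with
  | h a b =>
    refine le_trans (Finset.card_le_card (t := {(a, b), (b, a)}) ?_) Finset.card_le_two
    rintro ⟨x, y⟩ h
    simp only [Finset.mem_filter, Sym2.eq_iff] at h
    simp only [Finset.mem_insert, Finset.mem_singleton, Prod.mk.injEq]
    tauto

lemma S1_upper (H : Finset (Sym2 (Fin n))) (u v : Fin n) :
    (S1 d H u v).card ≤ (RH d n (insert s(u, v) H)).card * (n * d) := by
  unfold S1
  rw [card_prod_filter]
  refine Finset.sum_le_card_nsmul _ _ _ fun G hG => ?_
  have := card_pairs (mem_RH.1 hG).1 Finset.univ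
  simp only [Finset.card_univ, Fintype.card_fin] at this
  rw [← this]
  refine Finset.card_le_card fun q hq => ?_
  simp only [Finset.mem_filter, Finset.mem_univ, true_and, and_true] at hq ⊢
  exact hq.1

lemma S1_lower (H : Finset (Sym2 (Fin n))) (u v : Fin n) :
    (RH d n (insert s(u, v) H)).card * (n * d) ≤ (S1 d H u v).card +
      (RH d n (insert s(u, v) H)).card * (2 * H.card + 2 * ((d + 2) * d)) := by
  unfold S1
  rw [card_prod_filter]
  rw [← smul_eq_mul, ← smul_eq_mul (a := Finset.card _), ← Finset.sum_const, 
    ← Finset.sum_const, ← Finset.sum_add_distrib]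
  refine Finset.sum_le_sum fun G hG => ?_
  have hR := (mem_RH.1 hG).1
  have h0 := card_pairs hR Finset.univ
  simp only [Finset.card_univ, Fintype.card_fin] at h0
  rw [← h0]
  set A : Finset (Fin n) := {u, v} ∪ Finset.univ.filter (fun w => G.Adj u w)
  set B : Finset (Fin n) := {u, v} ∪ Finset.univ.filter (fun w => G.Adj v w)
  have hA : A.card ≤ d + 2 := by
    refine (Finset.card_union_le _ _).trans ?_
    rw [nbr_card hR]
    have := Finset.card_le_two (a := u) (b := v)
    omega
  have hB : B.card ≤ d + 2 := by
    refine (Finset.card_union_le _ _).trans ?_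
    rw [nbr_card hR]
    have := Finset.card_le_two (a := u) (b := v)
    omega
  have h1 := card_pairs hR A
  have h2 := card_pairs' hR B
  have h3 := card_sym2_fiber H
  have h4 : A.card * d ≤ (d + 2) * d := Nat.mul_le_mul_right _ hA
  have h5 : B.card * d ≤ (d + 2) * d := Nat.mul_le_mul_right _ hB
  set Z1 := (Finset.univ.filter (fun q : Fin n × Fin n => G.Adj q.1 q.2 ∧ q.1 ∈ A))
  set Z2 := (Finset.univ.filter (fun q : Fin n × Fin n => G.Adj q.1 q.2 ∧ q.2 ∈ B))
  set Z3 := (Finset.univ.filter (fun q : Fin n × Fin n => s(q.1, q.2) ∈ H))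
  refine (Finset.card_le_card (t := (Finset.univ.filter (fun q : Fin n × Fin n => 
    G.Adj q.1 q.2 ∧ s(q.1, q.2) ∉ H ∧ u ≠ q.1 ∧ u ≠ q.2 ∧ v ≠ q.1 ∧ v ≠ q.2 ∧
    ¬ G.Adj u q.1 ∧ ¬ G.Adj v q.2)) ∪ (Z3 ∪ (Z1 ∪ Z2))) ?_).trans ?_
  · rintro ⟨x, y⟩ hq
    simp only [Finset.mem_filter, Finset.mem_union, Finset.mem_univ, true_and, and_true, Z1, Z2, Z3,
      A, B, Finset.mem_insert, Finset.mem_singleton] at hq ⊢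
    grind
  · refine (Finset.card_union_le _ _).trans ?_
    have e1 := Finset.card_union_le Z3 (Z1 ∪ Z2)
    have e2 := Finset.card_union_le Z1 Z2
    dsimp only
    omega

lemma nbr_H_card {G : SimpleGraph (Fin n)} {H : Finset (Sym2 (Fin n))} (hG : G ∈ RH d n H)
    (u : Fin n) :
    (Finset.univ.filter (fun x => G.Adj u x ∧ s(u, x) ∉ H)).card = d - hdeg H u := by
  obtain ⟨hR, hH⟩ := mem_RH.1 hG
  have h1 := Finset.card_filter_add_card_filter_not (s := Finset.univ.filter (fun x => G.Adj u x))
    (fun x => s(u, x) ∈ H)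
  rw [nbr_card hR, Finset.filter_filter, Finset.filter_filter] at h1
  have h2 : (Finset.univ.filter (fun x => G.Adj u x ∧ s(u, x) ∈ H)).card = hdeg H u := by
    unfold hdeg
    refine Finset.card_bij (fun x _ => s(u, x)) ?_ ?_ ?_
    · intro x hx
      simp only [Finset.mem_filter, Finset.mem_univ, true_and] at hx ⊢
      exact ⟨hx.2, by simp⟩
    · intro x _ y _ h
      rw [Sym2.eq_iff] at h
      grind
    · intro e he
      simp only [Finset.mem_filter] at he
      obtain ⟨x, rfl⟩ := he.2
      exact ⟨x, by simpa using ⟨hH _ he.1, he.1⟩, rfl⟩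
  omega

/-- all pairs of non-H neighbours -/
lemma pairs_H_card {G : SimpleGraph (Fin n)} {H : Finset (Sym2 (Fin n))} (hG : G ∈ RH d n H)
    (u v : Fin n) :
    (Finset.univ.filter (fun q : Fin n × Fin n => (G.Adj u q.1 ∧ s(u, q.1) ∉ H) ∧
      (G.Adj v q.2 ∧ s(v, q.2) ∉ H))).card = (d - hdeg H u) * (d - hdeg H v) := by
  rw [← nbr_H_card hG u, ← nbr_H_card hG v, ← Finset.card_product]
  congr 1
  ext q
  simp

lemma S2_upper (H : Finset (Sym2 (Fin n))) (u v : Fin n) :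
    (S2 d H u v).card ≤ (RH d n H).card * ((d - hdeg H u) * (d - hdeg H v)) := by
  unfold S2
  rw [card_prod_filter]
  refine Finset.sum_le_card_nsmul _ _ _ fun G hG => ?_
  rw [← pairs_H_card hG u v]
  refine Finset.card_le_card fun q hq => ?_
  simp only [Finset.mem_filter, Finset.mem_univ, true_and] at hq ⊢
  tauto

/-- bad triples -/
noncomputable def BadS (d : ℕ) (H : Finset (Sym2 (Fin n))) (u v : Fin n) :
    Finset (SimpleGraph (Fin n) × (Fin n × Fin n)) :=
  (RH d n H ×ˢ Finset.univ).filter (fun p => ¬ p.1.Adj u v ∧ p.1.Adj u p.2.1 ∧ p.1.Adj v p.2.2 ∧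
    s(u, p.2.1) ∉ H ∧ s(v, p.2.2) ∉ H ∧ (p.1.Adj p.2.1 p.2.2 ∨ p.2.1 = p.2.2))

lemma RH_insert (H : Finset (Sym2 (Fin n))) (u v : Fin n) :
    RH d n (insert s(u, v) H) = (RH d n H).filter (fun G => G.Adj u v) := by
  ext G
  simp only [mem_RH, Finset.mem_filter, Finset.mem_insert, forall_eq_or_imp,
    SimpleGraph.mem_edgeSet]
  tauto

lemma S2_lower (H : Finset (Sym2 (Fin n))) (u v : Fin n) :
    (RH d n H).card * ((d - hdeg H u) * (d - hdeg H v)) ≤ (S2 d H u v).card + (BadS d H u v).card +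
     (RH d n (insert s(u, v) H)).card * ((d - hdeg H u) * (d - hdeg H v)) := by
  unfold S2 BadS
  rw [card_prod_filter]
  rw [card_prod_filter, RH_insert, ← smul_eq_mul,
    ← smul_eq_mul (a := Finset.card _), ← Finset.sum_const, 
    ← Finset.sum_const, ← Finset.sum_add_distrib, Finset.sum_filter, ← Finset.sum_add_distrib]
  refine Finset.sum_le_sum fun G hG => ?_
  split_ifs with h
  · omega
  · rw [← pairs_H_card hG u v, add_zero]
    refine le_trans (Finset.card_le_card fun q hq => ?_) (Finset.card_union_le _ _)
    simp only [Finset.mem_filter, Finset.mem_univ, true_and, Finset.mem_union] at hq ⊢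
    tauto

lemma step_upper (H : Finset (Sym2 (Fin n))) (u v : Fin n) (huv : u ≠ v) (hH : s(u, v) ∉ H) :
    (RH d n (insert s(u, v) H)).card * (n * d) ≤
      (RH d n H).card * ((d - hdeg H u) * (d - hdeg H v)) +
      (RH d n (insert s(u, v) H)).card * (2 * H.card + 2 * ((d + 2) * d)) := by
  have h1 := S1_lower (d := d) H u v
  have h2 := S2_upper (d := d) H u v
  have h3 := card_S1_eq (d := d) H u v huv hH
  omega

lemma step_lower (H : Finset (Sym2 (Fin n))) (u v : Fin n) (huv : u ≠ v) (hH : s(u, v) ∉ H) :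
    (RH d n H).card * ((d - hdeg H u) * (d - hdeg H v)) ≤
      (RH d n (insert s(u, v) H)).card * (n * d) + (BadS d H u v).card +
     (RH d n (insert s(u, v) H)).card * ((d - hdeg H u) * (d - hdeg H v)) := by
  have h1 := S1_upper (d := d) H u v
  have h2 := S2_lower (d := d) H u v
  have h3 := card_S1_eq (d := d) H u v huv hH
  omega

lemma RH_anti {H K : Finset (Sym2 (Fin n))} (h : H ⊆ K) : RH d n K ⊆ RH d n H := by
  intro G hG
  rw [mem_RH] at *
  exact ⟨hG.1, fun e he => hG.2 e (h he)⟩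

lemma union_bound (M : ℕ) (hn : 4 * M + 4 * (d + 2) ≤ n) (H K : Finset (Sym2 (Fin n)))
    (hd : Disjoint H K) (hM : H.card + K.card ≤ M) :
    ((RH d n (H ∪ K)).card : ℝ) ≤ (2 * d / n) ^ K.card * (RH d n H).card := by
  have hn0 : (0 : ℝ) < n := by
    have : 0 < n := by omega
    exact_mod_cast this
  induction K using Finset.induction_on with
  | empty => simp
  | insert e K he ih =>
    rw [Finset.card_insert_of_notMem he] at hM ⊢
    rw [Finset.disjoint_insert_right] at hd
    have ih := ih hd.2 (by omega)
    have key : ((RH d n (H ∪ insert e K)).card : ℝ) ≤ (2 * d / n) * (RH d n (H ∪ K)).card := by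
      rw [Finset.union_insert]
      induction e with
      | h u v =>
      by_cases huv : u = v
      · have : (RH d n (insert s(u, v) (H ∪ K))) = ∅ := by
          rw [RH_insert]
          simp [huv]
        rw [this]
        simp only [Finset.card_empty, Nat.cast_zero]
        positivity
      · have hs := step_upper (d := d) (H ∪ K) u v huv (by simp [hd.1, he])
        have hc : (H ∪ K).card ≤ M := (Finset.card_union_le _ _).trans (by omega)
        set a := (RH d n (insert s(u, v) (H ∪ K))).card
        set b := (RH d n (H ∪ K)).card
        have h1 : (d - hdeg (H ∪ K) u) * (d - hdeg (H ∪ K) v) ≤ d * d :=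
          Nat.mul_le_mul (Nat.sub_le _ _) (Nat.sub_le _ _)
        rcases Nat.eq_zero_or_pos d with hd0 | hd0
        · -- no edges
          have ha : a = 0 := by
            simp only [a]
            rw [Finset.card_eq_zero, Finset.eq_empty_iff_forall_notMem]
            intro G hG
            rw [RH_insert, Finset.mem_filter] at hG
            have := nbr_card (mem_RH.1 hG.1).1 u
            rw [hd0, Finset.card_eq_zero, Finset.filter_eq_empty_iff] at this
            exact this (Finset.mem_univ v) hG.2
          rw [ha]; simp only [Nat.cast_zero]; positivity
        · have h2 : 2 * (2 * (H ∪ K).card + 2 * ((d + 2) * d)) ≤ n * d := by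
            have : (4 * M + 4 * (d + 2)) * d ≤ n * d := Nat.mul_le_mul_right _ hn
            nlinarith
          have h3 : a * (n * d) ≤ 2 * (b * (d * d)) := by
            have h4 := Nat.mul_le_mul_left b h1
            have h5 := Nat.mul_le_mul_left a h2
            nlinarith
          have h4 : a * n ≤ 2 * d * b := by
            refine Nat.le_of_mul_le_mul_right ?_ hd0
            nlinarith
          have h5 : (a : ℝ) * n ≤ 2 * d * b := by exact_mod_cast h4
          rw [div_mul_eq_mul_div, le_div_iff₀ hn0]
          exact h5
    refine key.trans ?_
    rw [pow_succ, mul_comm ((2 * (d : ℝ) / n) ^ K.card), mul_assoc]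
    gcongr

end switching2
end RCP


namespace RCP
section switching3
open scoped Classical
variable {d n : ℕ}

lemma bad_bound (H : Finset (Sym2 (Fin n))) (u v : Fin n) (huv : u ≠ v)
    (hn : 4 * (H.card + 3) + 4 * (d + 2) ≤ n) :
    ((BadS d H u v).card : ℝ) ≤ 4 * d ^ 2 * (1 + 2 * H.card + 2 * d) / n * (RH d n H).card := by
  have hn1 : (1 : ℝ) ≤ n := by
    have : 1 ≤ n := by omega
    exact_mod_cast this
  have hn0 : (0 : ℝ) < n := by linarith
  set N : ℝ := (((RH d n H).card : ℕ) : ℝ) with hN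
  set p : ℝ := 2 * d / n with hp
  have hp0 : 0 ≤ p := by positivity
  have hN0 : 0 ≤ N := by positivity
  unfold BadS
  rw [card_prod_filter']
  push_cast
  have hq : ∀ q : Fin n × Fin n, (((RH d n H).filter (fun a => ¬ a.Adj u v ∧ a.Adj u q.1 ∧
      a.Adj v q.2 ∧ s(u, q.1) ∉ H ∧ s(v, q.2) ∉ H ∧ (a.Adj q.1 q.2 ∨ q.1 = q.2))).card : ℝ) ≤
      (if q.1 = q.2 then p ^ 2 * N else 0) + (if s(q.1, q.2) ∈ H then p ^ 2 * N else 0) +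
        p ^ 3 * N := by
    rintro ⟨x, y⟩
    dsimp only
    set Z := ((RH d n H).filter (fun a => ¬ a.Adj u v ∧ a.Adj u x ∧
      a.Adj v y ∧ s(u, x) ∉ H ∧ s(v, y) ∉ H ∧ (a.Adj x y ∨ x = y))) with hZ
    have i0 : 0 ≤ p ^ 2 * N := by positivity
    have i1 : 0 ≤ p ^ 3 * N := by positivity
    have i2 : 0 ≤ (if x = y then p ^ 2 * N else 0) := by split_ifs <;> simp [i0]
    have i3 : 0 ≤ (if s(x, y) ∈ H then p ^ 2 * N else 0) := by split_ifs <;> simp [i0]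
    rcases Z.eq_empty_or_nonempty with h0 | ⟨G, hG⟩
    · rw [h0]
      simp only [Finset.card_empty, Nat.cast_zero]
      linarith
    · rw [hZ, Finset.mem_filter] at hG
      obtain ⟨hG1, h1, h2, h3, h4, h5, h6⟩ := hG
      have hxv : x ≠ v := by rintro rfl; exact h1 h2
      have hyu : y ≠ u := by rintro rfl; exact h1 h3.symm
      have hxu := h2.ne
      have hyv := h3.ne
      have hne : s(u, x) ≠ s(v, y) := by rw [Ne, Sym2.eq_iff]; grind
      have hZ2 : x = y ∨ s(x, y) ∈ H → (Z.card : ℝ) ≤ p ^ 2 * N := by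
        intro _
        have hb := union_bound (d := d) (H.card + 3) hn H {s(u, x), s(v, y)}
          (by simp [h4, h5]) (by rw [Finset.card_pair hne]; omega)
        rw [Finset.card_pair hne] at hb
        refine le_trans ?_ hb
        norm_cast
        refine Finset.card_le_card fun G' hG' => ?_
        rw [hZ, Finset.mem_filter] at hG'
        rw [mem_RH] at hG' ⊢
        refine ⟨hG'.1.1, ?_⟩
        intro e he
        simp only [Finset.mem_union, Finset.mem_insert, Finset.mem_singleton] at he
        rcases he with he | rfl | rfl
        · exact hG'.1.2 e he
        · exact hG'.2.2.1
        · exact hG'.2.2.2.1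
      by_cases hxy : x = y
      · have := hZ2 (Or.inl hxy)
        rw [if_pos hxy]
        linarith
      by_cases hxyH : s(x, y) ∈ H
      · have := hZ2 (Or.inr hxyH)
        rw [if_pos hxyH]
        linarith
      have hc : ({s(u, x), s(v, y), s(x, y)} : Finset (Sym2 (Fin n))).card = 3 := by
        rw [Finset.card_eq_three]
        refine ⟨_, _, _, hne, ?_, ?_, rfl⟩
        · rw [Ne, Sym2.eq_iff]; grind
        · rw [Ne, Sym2.eq_iff]; grind
      have hb := union_bound (d := d) (H.card + 3) hn H {s(u, x), s(v, y), s(x, y)}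
          (by simp [h4, h5, hxyH]) (by rw [hc])
      rw [hc] at hb
      have : (Z.card : ℝ) ≤ p ^ 3 * N := by
        refine le_trans ?_ hb
        norm_cast
        refine Finset.card_le_card fun G' hG' => ?_
        rw [hZ, Finset.mem_filter] at hG'
        rw [mem_RH] at hG' ⊢
        refine ⟨hG'.1.1, ?_⟩
        intro e he
        simp only [Finset.mem_union, Finset.mem_insert, Finset.mem_singleton] at he
        rcases he with he | rfl | rfl | rfl
        · exact hG'.1.2 e he
        · exact hG'.2.2.1
        · exact hG'.2.2.2.1
        · exact hG'.2.2.2.2.2.2.resolve_right hxy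
      linarith
  refine (Finset.sum_le_sum fun q _ => hq q).trans ?_
  rw [Finset.sum_add_distrib, Finset.sum_add_distrib, ← Finset.sum_filter, ← Finset.sum_filter]
  simp only [Finset.sum_const, nsmul_eq_mul, Finset.card_univ, Fintype.card_prod, Fintype.card_fin]
  have hdiag : ((Finset.univ.filter (fun q : Fin n × Fin n => q.1 = q.2)).card : ℝ) ≤ n := by
    norm_cast
    have : (Finset.univ.filter (fun q : Fin n × Fin n => q.1 = q.2)).card
        ≤ (Finset.univ : Finset (Fin n)).card := by
      refine Finset.card_le_card_of_injOn (fun q => q.1) (by simp) ?_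
      rintro ⟨a, b⟩ h1 ⟨a', b'⟩ h2 h
      simp at h1 h2 h
      grind
    simpa using this
  have hHc : ((Finset.univ.filter (fun q : Fin n × Fin n => s(q.1, q.2) ∈ H)).card : ℝ)
      ≤ 2 * H.card := by exact_mod_cast card_sym2_fiber H
  calc _ ≤ (n : ℝ) * (p ^ 2 * N) + (2 * H.card * n) * (p ^ 2 * N) + (n * n : ℕ) * (p ^ 3 * N) := by
        gcongr
        refine hHc.trans ?_
        have : (0 : ℝ) ≤ 2 * H.card := by positivity
        nlinarith
    _ = _ := by
        rw [hp]; push_cast; field_simp; ring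

lemma step_two (H : Finset (Sym2 (Fin n))) (u v : Fin n) (huv : u ≠ v) (hH : s(u, v) ∉ H)
    (hn : 4 * (H.card + 3) + 4 * (d + 2) ≤ n) :
    |((RH d n (insert s(u, v) H)).card : ℝ) * (d * n) -
      ((d - hdeg H u : ℕ) : ℝ) * ((d - hdeg H v : ℕ) : ℝ) * (RH d n H).card| ≤
      (2 * d * (2 * H.card + 2 * ((d + 2) * d)) + 4 * d ^ 2 * (1 + 2 * H.card + 2 * d)
        + 2 * d * d ^ 2) / n * (RH d n H).card := by
  have hn0 : (0 : ℝ) < n := by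
    have : 0 < n := by omega
    exact_mod_cast this
  have hb := bad_bound (d := d) H u v huv hn
  have hU := union_bound (d := d) (H.card + 3) hn H {s(u, v)} (by simpa using hH) (by simp)
  rw [Finset.union_comm, ← Finset.insert_eq, Finset.card_singleton, pow_one] at hU
  have h1 := step_upper (d := d) H u v huv hH
  have h2 := step_lower (d := d) H u v huv hH
  have h3 : (d - hdeg H u) * (d - hdeg H v) ≤ d ^ 2 := by
    rw [sq]; exact Nat.mul_le_mul (Nat.sub_le _ _) (Nat.sub_le _ _)
  rify at h1 h2 h3
  set N : ℝ := (((RH d n H).card : ℕ) : ℝ)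
  set N' : ℝ := (((RH d n (insert s(u, v) H)).card : ℕ) : ℝ)
  set D1 := ((d - hdeg H u : ℕ) : ℝ)
  set D2 := ((d - hdeg H v : ℕ) : ℝ)
  have hN' : 0 ≤ N' := by positivity
  have hN : 0 ≤ N := by positivity
  set c : ℝ := 2 * H.card + 2 * ((d + 2) * d)
  set b : ℝ := 4 * d ^ 2 * (1 + 2 * H.card + 2 * d)
  have hc : 0 ≤ c := by positivity
  have hbb : 0 ≤ b := by positivity
  have e1 : N' * c ≤ (2 * d / n * N) * c := by gcongr
  have e2 : N' * (D1 * D2) ≤ (2 * d / n * N) * d ^ 2 := by gcongr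
  have f1 : (2 * d * c + b + 2 * d * d ^ 2) / n * N =
    (2 * d / n * N) * c + b / n * N + (2 * d / n * N) * d ^ 2 := by ring
  have f2 : 0 ≤ (2 * d / n * N) * c := by positivity
  have f3 : 0 ≤ b / n * N := by positivity
  have f4 : 0 ≤ (2 * d / n * N) * d ^ 2 := by positivity
  rw [f1, abs_le]
  constructor <;> nlinarith

lemma hdeg_insert (H : Finset (Sym2 (Fin n))) (e : Sym2 (Fin n)) (he : e ∉ H) (w : Fin n) :
    hdeg (insert e H) w = if w ∈ e then hdeg H w + 1 else hdeg H w := by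
  unfold hdeg
  rw [Finset.filter_insert]
  split_ifs with h
  · rw [Finset.card_insert_of_notMem (by simp [he])]
  · rfl

lemma prod_desc_insert (H : Finset (Sym2 (Fin n))) (u v : Fin n) (huv : u ≠ v)
    (hH : s(u, v) ∉ H) :
    ∏ w, d.descFactorial (hdeg (insert s(u, v) H) w) =
      (d - hdeg H u) * (d - hdeg H v) * ∏ w, d.descFactorial (hdeg H w) := by
  have h : ∀ w, d.descFactorial (hdeg (insert s(u, v) H) w) =
      (if w = u then d - hdeg H u else 1) * (if w = v then d - hdeg H v else 1) *
        d.descFactorial (hdeg H w) := by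
    intro w
    rw [hdeg_insert _ _ hH]
    simp only [Sym2.mem_iff]
    by_cases h1 : w = u
    · subst h1
      simp [huv, Nat.descFactorial_succ]
    · by_cases h2 : w = v
      · subst h2
        simp [huv.symm, Nat.descFactorial_succ]
      · simp [h1, h2]
  simp only [h, Finset.prod_mul_distrib, Finset.prod_ite_eq', Finset.mem_univ, if_true]

lemma count_asymp (d k : ℕ) : ∃ K : ℝ, 0 ≤ K ∧ ∃ n0 : ℕ, 1 ≤ n0 ∧ ∀ n, n0 ≤ n →
    ∀ H : Finset (Sym2 (Fin n)), H.card = k → (∀ e ∈ H, ¬ e.IsDiag) →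
    |((RH d n H).card : ℝ) * (d * n) ^ k -
      ((∏ w, d.descFactorial (hdeg H w) : ℕ) : ℝ) * (Rg d n).card| ≤ K / n * (Rg d n).card := by
  induction k with
  | zero =>
    refine ⟨0, le_rfl, 1, le_rfl, fun n _ H hH _ => ?_⟩
    rw [Finset.card_eq_zero] at hH
    subst hH
    have : RH d n ∅ = Rg d n := by ext G; simp [mem_RH]
    simp [this, hdeg]
  | succ k ih =>
    obtain ⟨K, hK, n0, hn0, ih⟩ := ih
    set K3 : ℝ := (2 * d * (2 * k + 2 * ((d + 2) * d)) + 4 * d ^ 2 * (1 + 2 * k + 2 * d)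
        + 2 * d * d ^ 2) with hK3
    have hK3' : 0 ≤ K3 := by positivity
    refine ⟨K3 * (d * (2 * d)) ^ k + d ^ 2 * K, by positivity,
      max n0 (4 * (k + 3) + 4 * (d + 2)), by simp [hn0], ?_⟩
    intro n hn H' hH' hdiag'
    have hn1 : n0 ≤ n := le_trans (le_max_left _ _) hn
    have hn2 : 4 * (k + 3) + 4 * (d + 2) ≤ n := le_trans (le_max_right _ _) hn
    obtain ⟨e, H, heH, rfl, hHk⟩ := Finset.card_eq_succ.1 hH'
    induction e with
    | h u v =>
    have huv : u ≠ v := by simpa using hdiag' s(u, v) (by simp)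
    have hdiag : ∀ e ∈ H, ¬ e.IsDiag := fun e he => hdiag' e (by simp [he])
    have i1 := ih n hn1 H hHk hdiag
    have i2 := step_two (d := d) H u v huv heH (by rw [hHk]; exact hn2)
    have i3 := union_bound (d := d) (k + 3) hn2 ∅ H (by simp) (by simp [hHk])
    have : RH d n ∅ = Rg d n := by ext G; simp [mem_RH]
    rw [Finset.empty_union, this, hHk] at i3
    rw [hHk, ← hK3] at i2
    rw [prod_desc_insert H u v huv heH]
    have h3 : (d - hdeg H u) * (d - hdeg H v) ≤ d ^ 2 := by
      rw [sq]; exact Nat.mul_le_mul (Nat.sub_le _ _) (Nat.sub_le _ _)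
    rify at h3
    push_cast
    push_cast at i1
    have hnr : (0 : ℝ) < n := by
      have : 0 < n := by omega
      exact_mod_cast this
    set N : ℝ := (((RH d n H).card : ℕ) : ℝ)
    set N' : ℝ := (((RH d n (insert s(u, v) H)).card : ℕ) : ℝ)
    set N0 : ℝ := (((Rg d n).card : ℕ) : ℝ)
    set D1 := ((d - hdeg H u : ℕ) : ℝ)
    set D2 := ((d - hdeg H v : ℕ) : ℝ)
    set P := ∏ w, (d.descFactorial (hdeg H w) : ℝ)
    have hD : 0 ≤ D1 * D2 := by positivity
    have hN0 : 0 ≤ N0 := by positivity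
    have e1 : N' * (d * n) ^ (k + 1) - D1 * D2 * P * N0 =
      (d * n) ^ k * (N' * (d * n) - D1 * D2 * N) + D1 * D2 * (N * (d * n) ^ k - P * N0) := by ring
    rw [e1]
    refine (abs_add_le _ _).trans ?_
    rw [abs_mul, abs_mul, abs_of_nonneg hD, abs_of_nonneg (by positivity : (0 : ℝ) ≤ (d * n) ^ k)]
    calc _ ≤ (d * n : ℝ) ^ k * (K3 / n * ((2 * d / n) ^ k * N0)) + d ^ 2 * (K / n * N0) := by
          gcongr
          refine i2.trans ?_
          gcongr
      _ = _ := by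
          have : (d * n : ℝ) ^ k * (2 * d / n) ^ k = (d * (2 * d)) ^ k := by
            rw [← mul_pow]; congr 1; field_simp
          rw [← this]; ring

end switching3
end RCP


namespace RCP
section cycles
open scoped Classical
variable {n : ℕ}

/-- edge set of a cyclic sequence -/
noncomputable def eset {l : ℕ} [NeZero l] (f : ZMod l → Fin n) : Finset (Sym2 (Fin n)) :=
  Finset.univ.image (fun t => s(f t, f (t + 1)))

lemma mem_eset {l : ℕ} [NeZero l] {f : ZMod l → Fin n} {e : Sym2 (Fin n)} :
    e ∈ eset f ↔ ∃ t, s(f t, f (t + 1)) = e := by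
  simp [eset]

lemma edge_mem_eset {l : ℕ} [NeZero l] (f : ZMod l → Fin n) (t : ZMod l) :
    s(f t, f (t + 1)) ∈ eset f := mem_eset.2 ⟨t, rfl⟩

lemma one_ne {l : ℕ} (hl : 3 ≤ l) : (1 : ZMod l) ≠ 0 := by
  intro h
  have h2 : ((1 : ℕ) : ZMod l) = 0 := by simpa using h
  rw [ZMod.natCast_eq_zero_iff] at h2
  have := Nat.le_of_dvd (by norm_num) h2
  omega

lemma two_ne {l : ℕ} (hl : 3 ≤ l) : (1 : ZMod l) + 1 ≠ 0 := by
  intro h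
  have h2 : ((2 : ℕ) : ZMod l) = 0 := by rw [← h]; push_cast; norm_num
  rw [ZMod.natCast_eq_zero_iff] at h2
  have := Nat.le_of_dvd (by norm_num) h2
  omega

lemma succ_ne {l : ℕ} (hl : 3 ≤ l) (t : ZMod l) : t + 1 ≠ t := by
  intro h; exact one_ne hl (by simpa using h)

lemma add_two_ne {l : ℕ} (hl : 3 ≤ l) (t : ZMod l) : t + 1 + 1 ≠ t := by
  intro h
  rw [add_assoc] at h
  exact two_ne hl (by simpa using h)

lemma eset_at {l : ℕ} [NeZero l] {f : ZMod l → Fin n} (hf : Function.Injective f)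
    (a : ZMod l) {e : Sym2 (Fin n)} (he : e ∈ eset f) (ha : f a ∈ e) :
    e = s(f a, f (a + 1)) ∨ e = s(f a, f (a - 1)) := by
  obtain ⟨t, rfl⟩ := mem_eset.1 he
  rw [Sym2.mem_iff] at ha
  rcases ha with h | h
  · left; rw [hf h]
  · right
    have := hf h
    rw [this, add_sub_cancel_right, Sym2.eq_swap]

lemma nbr_eset {l : ℕ} [NeZero l] {f : ZMod l → Fin n} (hf : Function.Injective f)
    (a : ZMod l) {w : Fin n} (he : s(f a, w) ∈ eset f) : w = f (a + 1) ∨ w = f (a - 1) := by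
  rcases eset_at hf a he (by simp) with h | h
  · left; rw [Sym2.eq_iff] at h; grind
  · right; rw [Sym2.eq_iff] at h; grind

lemma card_eset {l : ℕ} [NeZero l] (hl : 3 ≤ l) {f : ZMod l → Fin n} (hf : Function.Injective f) :
    (eset f).card = l := by
  unfold eset
  rw [Finset.card_image_of_injective, Finset.card_univ, ZMod.card]
  intro a b h
  simp only [Sym2.eq_iff] at h
  rcases h with h | ⟨h1, h2⟩
  · exact hf h.1
  · have h1 := hf h1
    have h2 := hf h2
    rw [h1] at h2
    exact absurd h2 (add_two_ne hl b)

lemma hdeg_eset {l : ℕ} [NeZero l] (hl : 3 ≤ l) {f : ZMod l → Fin n} (hf : Function.Injective f)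
    (a : ZMod l) : hdeg (eset f) (f a) = 2 := by
  unfold hdeg
  have : (eset f).filter (fun e => f a ∈ e) = {s(f a, f (a + 1)), s(f a, f (a - 1))} := by
    ext e
    simp only [Finset.mem_filter, Finset.mem_insert, Finset.mem_singleton]
    constructor
    · rintro ⟨h1, h2⟩; exact eset_at hf a h1 h2
    · rintro (rfl | rfl)
      · exact ⟨edge_mem_eset f a, by simp⟩
      · refine ⟨?_, by simp⟩
        have := edge_mem_eset f (a - 1)
        rwa [sub_add_cancel, Sym2.eq_swap] at this
  rw [this, Finset.card_pair]
  intro h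
  rw [Sym2.eq_iff] at h
  rcases h with h | h
  · have := hf h.2
    have h2 := add_two_ne hl (a - 1)
    apply h2
    rw [sub_add_cancel]; exact this
  · have := hf h.2
    exact succ_ne hl a this

lemma mem_of_hdeg {l : ℕ} [NeZero l] {f : ZMod l → Fin n} {e : Sym2 (Fin n)} (he : e ∈ eset f)
    {w : Fin n} (hw : w ∈ e) : ∃ t, f t = w := by
  obtain ⟨t, rfl⟩ := mem_eset.1 he
  rw [Sym2.mem_iff] at hw
  rcases hw with rfl | rfl <;> exact ⟨_, rfl⟩

lemma eset_sub_of_meet {l l' : ℕ} [NeZero l] [NeZero l'] (hl : 3 ≤ l) (hl' : 3 ≤ l')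
    {f : ZMod l → Fin n} {g : ZMod l' → Fin n} (hf : Function.Injective f)
    (hg : Function.Injective g) (H : Finset (Sym2 (Fin n))) (hfH : eset f ⊆ H) (hgH : eset g ⊆ H)
    (hdeg2 : ∀ w, hdeg H w ≤ 2) (t0 : ZMod l) (s0 : ZMod l') (h0 : f t0 = g s0) :
    eset f ⊆ eset g := by
  have key : ∀ t : ZMod l, (∃ s, g s = f t) → s(f t, f (t + 1)) ∈ eset g := by
    rintro t ⟨s, hs⟩
    have h1 := hdeg_eset hl hf t
    have h2 := hdeg_eset hl' hg s
    rw [hs] at h2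
    have h3 := hdeg2 (f t)
    unfold hdeg at h1 h2 h3
    have e1 : (eset f).filter (fun e => f t ∈ e) = H.filter (fun e => f t ∈ e) :=
      Finset.eq_of_subset_of_card_le (Finset.filter_subset_filter _ hfH) (by omega)
    have e2 : (eset g).filter (fun e => f t ∈ e) = H.filter (fun e => f t ∈ e) :=
      Finset.eq_of_subset_of_card_le (Finset.filter_subset_filter _ hgH) (by omega)
    have : s(f t, f (t + 1)) ∈ (eset f).filter (fun e => f t ∈ e) := by
      simp [edge_mem_eset]
    rw [e1, ← e2, Finset.mem_filter] at this
    exact this.1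
  have ind : ∀ k : ℕ, ∃ s, g s = f (t0 + k) := by
    intro k
    induction k with
    | zero => exact ⟨s0, by simp [h0]⟩
    | succ k ih =>
      have := key _ ih
      have h2 := mem_of_hdeg this (w := f (t0 + k + 1)) (by simp)
      push_cast
      rwa [← add_assoc]
  intro e he
  obtain ⟨t, rfl⟩ := mem_eset.1 he
  apply key
  have := ind (t - t0).val
  rwa [ZMod.natCast_zmod_val, add_sub_cancel] at this

lemma eset_eq_of_meet {l l' : ℕ} [NeZero l] [NeZero l'] (hl : 3 ≤ l) (hl' : 3 ≤ l')
    {f : ZMod l → Fin n} {g : ZMod l' → Fin n} (hf : Function.Injective f)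
    (hg : Function.Injective g) (H : Finset (Sym2 (Fin n))) (hfH : eset f ⊆ H) (hgH : eset g ⊆ H)
    (hdeg2 : ∀ w, hdeg H w ≤ 2) (t0 : ZMod l) (s0 : ZMod l') (h0 : f t0 = g s0) :
    eset f = eset g :=
  (eset_sub_of_meet hl hl' hf hg H hfH hgH hdeg2 t0 s0 h0).antisymm
    (eset_sub_of_meet hl' hl hg hf H hgH hfH hdeg2 s0 t0 h0.symm)

lemma fiber_card {l : ℕ} [NeZero l] (hl : 3 ≤ l) {f : ZMod l → Fin n} (hf : Function.Injective f) :
    (Finset.univ.filter (fun g : ZMod l → Fin n => Function.Injective g ∧ eset g = eset f)).card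
      = 2 * l := by
  have hE : ∀ b : Bool, (if b then (1 : ZMod l) else -1) * (if b then (1 : ZMod l) else -1) = 1 := by
    intro b; cases b <;> simp
  have hcard : (Finset.univ : Finset (ZMod l × Bool)).card = 2 * l := by
    simp [Finset.card_univ, ZMod.card, mul_comm]
  rw [← hcard]
  symm
  refine Finset.card_bij (fun p _ => fun t => f (p.1 + (if p.2 then (1 : ZMod l) else -1) * t))
    ?_ ?_ ?_
  · rintro ⟨j, b⟩ _
    simp only [Finset.mem_filter, Finset.mem_univ, true_and]
    have hinj : Function.Injective (fun t => f (j + (if b then (1 : ZMod l) else -1) * t)) := by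
      intro x y hxy
      have := add_left_cancel (hf hxy)
      have h2 := congrArg (fun z => (if b then (1 : ZMod l) else -1) * z) this
      simpa only [← mul_assoc, hE, one_mul] using h2
    refine ⟨hinj, ?_⟩
    refine Finset.eq_of_subset_of_card_le ?_ (by rw [card_eset hl hf, card_eset hl hinj])
    intro e he
    obtain ⟨t, rfl⟩ := mem_eset.1 he
    cases b
    · have := edge_mem_eset f (j - t - 1)
      rw [sub_add_cancel, Sym2.eq_swap] at this
      convert this using 4 <;> simp <;> ring
    · have := edge_mem_eset f (j + t)
      simpa [add_assoc] using this
  · rintro ⟨j, b⟩ _ ⟨j', b'⟩ _ h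
    have h0 := hf (congrFun h 0)
    have h1 := hf (congrFun h 1)
    simp only [mul_zero, add_zero] at h0
    subst h0
    simp only [mul_one, add_right_inj] at h1
    have h2 := two_ne hl
    have h3 : (1 : ZMod l) ≠ -1 := fun h => h2 (by nth_rewrite 1 [h]; simp)
    have h4 : (-1 : ZMod l) ≠ 1 := h3.symm
    cases b <;> cases b' <;> simp_all
  · intro g hg
    simp only [Finset.mem_filter, Finset.mem_univ, true_and] at hg
    obtain ⟨hg, hgf⟩ := hg
    have hedge : ∀ t, s(g t, g (t + 1)) ∈ eset f := fun t => hgf ▸ edge_mem_eset g t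
    obtain ⟨j, hj⟩ := mem_of_hdeg (hedge 0) (w := g 0) (by simp)
    have h01 := hedge 0
    rw [← hj] at h01
    have hb : ∃ b : Bool, g 1 = f (j + (if b then (1 : ZMod l) else -1)) := by
      rcases nbr_eset hf j h01 with h | h
      · exact ⟨true, by simpa using h⟩
      · exact ⟨false, by simpa [sub_eq_add_neg] using h⟩
    obtain ⟨b, hb⟩ := hb
    refine ⟨(j, b), Finset.mem_univ _, ?_⟩
    set ε : ZMod l := if b then (1 : ZMod l) else -1 with hε
    have hε1 : ε = 1 ∨ ε = -1 := by rw [hε]; cases b <;> simp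
    have ind : ∀ k : ℕ, g k = f (j + ε * k) ∧ g (k + 1) = f (j + ε * (k + 1)) := by
      intro k
      induction k with
      | zero => simp [hj, hb]
      | succ k ih =>
        push_cast
        refine ⟨ih.2, ?_⟩
        have h1 := hedge (k + 1)
        rw [ih.2] at h1
        have hne : g (k + 1 + 1) ≠ g k := fun h => add_two_ne hl (k : ZMod l) (hg h)
        rw [ih.1] at hne
        rcases nbr_eset hf _ h1 with h | h <;> rcases hε1 with h' | h'
        · rw [h, h']; congr 1; ring
        · exfalso; apply hne; rw [h, h']; congr 1; ring
        · exfalso; apply hne; rw [h, h']; congr 1; ring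
        · rw [h, h']; congr 1; ring
    funext t
    have := (ind t.val).1
    rw [ZMod.natCast_zmod_val] at this
    exact this.symm

/-- cyclic sequences of length `l` in `G` -/
noncomputable def CycS (G : SimpleGraph (Fin n)) (l : ℕ) [NeZero l] : Finset (ZMod l → Fin n) :=
  Finset.univ.filter (fun f => Function.Injective f ∧ ∀ i, G.Adj (f i) (f (i + 1)))

lemma mem_CycS {G : SimpleGraph (Fin n)} {l : ℕ} [NeZero l] {f : ZMod l → Fin n} :
    f ∈ CycS G l ↔ Function.Injective f ∧ ∀ e ∈ eset f, e ∈ G.edgeSet := by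
  simp [CycS, mem_eset]

/-- cycles (edge sets) of length `l` in `G` -/
noncomputable def ES (G : SimpleGraph (Fin n)) (l : ℕ) [NeZero l] : Finset (Finset (Sym2 (Fin n))) :=
  (CycS G l).image eset

lemma ES_fiber (G : SimpleGraph (Fin n)) (l : ℕ) [NeZero l] (hl : 3 ≤ l)
    (e : Finset (Sym2 (Fin n))) (he : e ∈ ES G l) :
    ((CycS G l).filter (fun f => eset f = e)).card = 2 * l := by
  obtain ⟨f, hf, rfl⟩ := Finset.mem_image.1 he
  rw [mem_CycS] at hf
  rw [← fiber_card hl hf.1]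
  congr 1
  ext g
  simp only [Finset.mem_filter, mem_CycS, Finset.mem_univ, true_and]
  constructor
  · exact fun h => ⟨h.1.1, h.2⟩
  · exact fun h => ⟨⟨h.1, h.2 ▸ hf.2⟩, h.2⟩

lemma cycleCount_eq (G : SimpleGraph (Fin n)) (l : ℕ) [NeZero l] (hl : 3 ≤ l) :
    cycleCount G l = (ES G l).card := by
  have h1 : (CycS G l).card = (ES G l).card * (2 * l) := by
    rw [Finset.card_eq_sum_card_fiberwise (f := eset) (t := ES G l)]
    · rw [Finset.sum_congr rfl (fun e he => ES_fiber G l hl e he)]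
      simp
    · intro f hf
      exact Finset.mem_image_of_mem _ hf
  unfold cycleCount
  have h2 : {f : ZMod l → Fin n | Function.Injective f ∧ ∀ i : ZMod l, G.Adj (f i) (f (i + 1))}
      = (CycS G l : Set (ZMod l → Fin n)) := by
    ext f; simp [CycS]
  rw [h2, Set.ncard_coe_finset, h1]
  exact Nat.mul_div_cancel _ (by omega)

lemma tuple_card (G : SimpleGraph (Fin n)) (l r : ℕ) [NeZero l] (hl : 3 ≤ l) :
    (Finset.univ.filter (fun h : Fin r → ZMod l → Fin n => (∀ k, h k ∈ CycS G l) ∧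
      Function.Injective (fun k => eset (h k)))).card
      = (2 * l) ^ r * (cycleCount G l).descFactorial r := by
  rw [cycleCount_eq G l hl]
  set t : Finset (Fin r → Finset (Sym2 (Fin n))) :=
    Finset.univ.filter (fun e => (∀ k, e k ∈ ES G l) ∧ Function.Injective e) with ht
  have hc : t.card = (ES G l).card.descFactorial r := by
    have : Fintype.card (Fin r ↪ (ES G l)) = (ES G l).card.descFactorial r := by
      rw [Fintype.card_embedding_eq]; simp
    rw [← this, ← Finset.card_univ]
    symm
    refine Finset.card_bij (fun φ _ => fun k => (φ k : Finset (Sym2 (Fin n)))) ?_ ?_ ?_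
    · intro φ _
      simp only [ht, Finset.mem_filter, Finset.mem_univ, true_and]
      exact ⟨fun k => (φ k).2, fun a b h => φ.injective (Subtype.ext h)⟩
    · intro φ _ ψ _ h
      ext1 k
      exact Subtype.ext (congrFun h k)
    · intro e he
      simp only [ht, Finset.mem_filter, Finset.mem_univ, true_and] at he
      exact ⟨⟨fun k => ⟨e k, he.1 k⟩, fun a b h => he.2 (by simpa using h)⟩, Finset.mem_univ _, rfl⟩
  rw [Finset.card_eq_sum_card_fiberwise (f := fun h k => eset (h k)) (t := t)]
  · rw [← hc, mul_comm, ← smul_eq_mul]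
    refine Finset.sum_eq_card_nsmul ?_
    intro e he
    simp only [ht, Finset.mem_filter, Finset.mem_univ, true_and] at he
    have : (Finset.univ.filter (fun h : Fin r → ZMod l → Fin n => (∀ k, h k ∈ CycS G l) ∧
      Function.Injective (fun k => eset (h k)))).filter (fun h => (fun k => eset (h k)) = e)
      = Fintype.piFinset (fun k => (CycS G l).filter (fun f => eset f = e k)) := by
      ext h
      simp only [Finset.mem_filter, Finset.mem_univ, true_and, Fintype.mem_piFinset]
      constructor
      · rintro ⟨⟨h1, h2⟩, h3⟩ k
        exact ⟨h1 k, congrFun h3 k⟩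
      · intro h1
        have h3 : (fun k => eset (h k)) = e := funext fun k => (h1 k).2
        refine ⟨⟨fun k => (h1 k).1, ?_⟩, h3⟩
        rw [h3]; exact he.2
    rw [this, Fintype.card_piFinset, Finset.prod_congr rfl (fun k _ => ES_fiber G l hl _ (he.1 k))]
    simp
  · intro h hh
    simp only [Finset.coe_filter, Finset.mem_univ, true_and, Set.mem_ofPred_eq, ht] at hh ⊢
    exact ⟨fun k => Finset.mem_image_of_mem _ (hh.1 k), hh.2⟩

end cycles
end RCP


namespace RCP
section tuples
open scoped Classical
variable {n : ℕ} {I : Type} [Fintype I] {L : I → ℕ} [∀ i, NeZero (L i)]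

/-- component of a tuple of cyclic sequences -/
def slice (F : (Σ i, ZMod (L i)) → Fin n) (i : I) : ZMod (L i) → Fin n := fun t => F ⟨i, t⟩

/-- union of the edge sets -/
noncomputable def EE (F : (Σ i, ZMod (L i)) → Fin n) : Finset (Sym2 (Fin n)) :=
  Finset.univ.biUnion (fun i => eset (slice F i))

/-- all components injective, edge sets different -/
def GoodF (F : (Σ i, ZMod (L i)) → Fin n) : Prop :=
  (∀ i, Function.Injective (slice F i)) ∧ Function.Injective (fun i => eset (slice F i))

lemma mem_EE {F : (Σ i, ZMod (L i)) → Fin n} {e : Sym2 (Fin n)} :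
    e ∈ EE F ↔ ∃ i, e ∈ eset (slice F i) := by simp [EE]

lemma eset_sub_EE (F : (Σ i, ZMod (L i)) → Fin n) (i : I) : eset (slice F i) ⊆ EE F :=
  fun _ he => mem_EE.2 ⟨i, he⟩

lemma slice_inj {F : (Σ i, ZMod (L i)) → Fin n} (hF : Function.Injective F) (i : I) :
    Function.Injective (slice F i) := by
  intro a b h
  have := hF h
  simpa using this

lemma eset_meet {F : (Σ i, ZMod (L i)) → Fin n} (hF : Function.Injective F) {i j : I}
    {e : Sym2 (Fin n)} (hi : e ∈ eset (slice F i)) {w : Fin n} (hw : w ∈ e)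
    {t : ZMod (L j)} (ht : F ⟨j, t⟩ = w) : i = j := by
  obtain ⟨s, hs⟩ := mem_of_hdeg hi hw
  have : F ⟨i, s⟩ = F ⟨j, t⟩ := by rw [ht]; exact hs
  have := hF this
  exact congrArg Sigma.fst this

lemma eset_disj {F : (Σ i, ZMod (L i)) → Fin n} (hF : Function.Injective F) {i j : I}
    (hij : i ≠ j) : Disjoint (eset (slice F i)) (eset (slice F j)) := by
  rw [Finset.disjoint_left]
  intro e hi hj
  obtain ⟨t, rfl⟩ := mem_eset.1 hj
  exact hij (eset_meet hF hi (w := slice F j t) (by simp) rfl)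

lemma good_of_inj {F : (Σ i, ZMod (L i)) → Fin n} (hF : Function.Injective F) : GoodF F := by
  refine ⟨slice_inj hF, ?_⟩
  intro i j h
  by_contra hij
  have := eset_disj hF hij
  simp only at h
  rw [h, disjoint_self] at this
  have h2 := edge_mem_eset (slice F j) 0
  rw [this] at h2
  simp at h2

lemma card_EE_le (hL : ∀ i, 3 ≤ L i) {F : (Σ i, ZMod (L i)) → Fin n} (hF : GoodF F) :
    (EE F).card ≤ Fintype.card (Σ i, ZMod (L i)) := by
  refine Finset.card_biUnion_le.trans ?_
  rw [Fintype.card_sigma]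
  refine Finset.sum_le_sum fun i _ => ?_
  rw [card_eset (hL i) (hF.1 i), ZMod.card]

lemma card_EE_inj (hL : ∀ i, 3 ≤ L i) {F : (Σ i, ZMod (L i)) → Fin n} (hF : Function.Injective F) :
    (EE F).card = Fintype.card (Σ i, ZMod (L i)) := by
  unfold EE
  rw [Finset.card_biUnion (fun i _ j _ hij => eset_disj hF hij), Fintype.card_sigma]
  refine Finset.sum_congr rfl fun i _ => ?_
  rw [card_eset (hL i) (slice_inj hF i), ZMod.card]

lemma not_diag (hL : ∀ i, 3 ≤ L i) {F : (Σ i, ZMod (L i)) → Fin n} (hF : GoodF F) :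
    ∀ e ∈ EE F, ¬ e.IsDiag := by
  intro e he
  obtain ⟨i, hi⟩ := mem_EE.1 he
  obtain ⟨t, rfl⟩ := mem_eset.1 hi
  rw [Sym2.mk_isDiag_iff]
  intro h
  exact succ_ne (hL i) t (hF.1 i h).symm

lemma hdeg_EE_inj (hL : ∀ i, 3 ≤ L i) {F : (Σ i, ZMod (L i)) → Fin n} (hF : Function.Injective F)
    (v : Σ i, ZMod (L i)) : hdeg (EE F) (F v) = 2 := by
  obtain ⟨j, t⟩ := v
  rw [← hdeg_eset (hL j) (slice_inj hF j) t]
  unfold hdeg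
  congr 1
  ext e
  simp only [Finset.mem_filter, mem_EE]
  constructor
  · rintro ⟨⟨i, hi⟩, h⟩
    have := eset_meet hF hi h rfl
    subst this
    exact ⟨hi, h⟩
  · rintro ⟨h1, h2⟩
    exact ⟨⟨j, h1⟩, h2⟩

lemma hdeg_EE_off {F : (Σ i, ZMod (L i)) → Fin n} {w : Fin n} (hw : ∀ v, F v ≠ w) :
    hdeg (EE F) w = 0 := by
  unfold hdeg
  rw [Finset.card_eq_zero, Finset.filter_eq_empty_iff]
  intro e he h
  obtain ⟨i, hi⟩ := mem_EE.1 he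
  obtain ⟨t, ht⟩ := mem_of_hdeg hi h
  exact hw ⟨i, t⟩ ht

lemma prod_EE_inj (d : ℕ) (hL : ∀ i, 3 ≤ L i) {F : (Σ i, ZMod (L i)) → Fin n}
    (hF : Function.Injective F) :
    ∏ w, d.descFactorial (hdeg (EE F) w) = (d.descFactorial 2) ^ Fintype.card (Σ i, ZMod (L i)) := by
  rw [← Finset.prod_subset (Finset.subset_univ (Finset.univ.image F))]
  · rw [Finset.prod_image (fun a _ b _ h => hF h),
      Finset.prod_congr rfl (fun v _ => by rw [hdeg_EE_inj hL hF v])]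
    simp
  · intro w _ hw
    rw [hdeg_EE_off, Nat.descFactorial_zero]
    intro v hv
    exact hw (Finset.mem_image.2 ⟨v, Finset.mem_univ _, hv⟩)

lemma handshake (H : Finset (Sym2 (Fin n))) (hH : ∀ e ∈ H, ¬ e.IsDiag) :
    ∑ w, hdeg H w = 2 * H.card := by
  unfold hdeg
  simp_rw [Finset.card_filter]
  rw [Finset.sum_comm, Finset.sum_congr rfl (g := fun _ => 2)]
  · simp [mul_comm]
  · intro e he
    rw [← Finset.card_filter, ← Sym2.card_toFinset_of_not_isDiag e (hH e he)]
    congr 1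
    ext w
    simp

lemma card_EE_non (hL : ∀ i, 3 ≤ L i) {F : (Σ i, ZMod (L i)) → Fin n} (hF : GoodF F)
    (hn : ¬ Function.Injective F) : (Finset.univ.image F).card + 1 ≤ (EE F).card := by
  have h2 : ∀ v, 2 ≤ hdeg (EE F) (F v) := by
    rintro ⟨i, t⟩
    rw [← hdeg_eset (hL i) (hF.1 i) t]
    exact Finset.card_le_card (Finset.filter_subset_filter _ (eset_sub_EE F i))
  have h3 : ∃ w, 3 ≤ hdeg (EE F) w := by
    by_contra hcon
    push Not at hcon
    apply hn
    rintro ⟨i, t⟩ ⟨j, s⟩ h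
    have := eset_eq_of_meet (hL i) (hL j) (hF.1 i) (hF.1 j) (EE F) (eset_sub_EE F i)
      (eset_sub_EE F j) (fun w => by have := hcon w; omega) t s h
    have := hF.2 this
    subst this
    have := hF.1 i h
    rw [this]
  obtain ⟨w, hw⟩ := h3
  have hwim : w ∈ Finset.univ.image F := by
    by_contra hc
    rw [hdeg_EE_off] at hw
    · omega
    · intro v hv
      exact hc (Finset.mem_image.2 ⟨v, Finset.mem_univ _, hv⟩)
  have hs : ∑ w ∈ Finset.univ.image F, 2 < ∑ w ∈ Finset.univ.image F, hdeg (EE F) w := by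
    refine Finset.sum_lt_sum ?_ ⟨w, hwim, hw⟩
    intro x hx
    obtain ⟨v, _, rfl⟩ := Finset.mem_image.1 hx
    exact h2 v
  have h4 : ∑ w ∈ Finset.univ.image F, hdeg (EE F) w ≤ ∑ w, hdeg (EE F) w :=
    Finset.sum_le_sum_of_subset (Finset.subset_univ _)
  rw [handshake _ (not_diag hL hF)] at h4
  simp at hs
  omega

lemma count_im {V : Type} [Fintype V] [DecidableEq V] (j : ℕ) :
    (Finset.univ.filter (fun F : V → Fin n => (Finset.univ.image F).card = j)).card
      ≤ n ^ j * j ^ Fintype.card V := by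
  have h : Finset.univ.filter (fun F : V → Fin n => (Finset.univ.image F).card = j) ⊆
      (Finset.univ : Finset ((Fin j → Fin n) × (V → Fin j))).image (fun p => p.1 ∘ p.2) := by
    intro F hF
    simp only [Finset.mem_filter, Finset.mem_univ, true_and] at hF
    let e := (Finset.univ.image F).equivFinOfCardEq hF
    refine Finset.mem_image.2 ⟨(fun k => (e.symm k : Fin n), fun v => e ⟨F v, by simp⟩),
      Finset.mem_univ _, ?_⟩
    funext v
    simp
  refine (Finset.card_le_card h).trans (Finset.card_image_le.trans ?_)
  simp [Finset.card_univ]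

lemma sum_non (hn : 1 ≤ n) {V : Type} [Fintype V] [DecidableEq V] :
    ∑ F : V → Fin n, (1 / (n : ℝ)) ^ (Finset.univ.image F).card ≤
      ∑ j ∈ Finset.range (Fintype.card V + 1), (j : ℝ) ^ Fintype.card V := by
  have hn0 : (0 : ℝ) < n := by exact_mod_cast hn
  rw [← Finset.sum_fiberwise_of_maps_to (s := Finset.univ)
    (t := Finset.range (Fintype.card V + 1)) (g := fun F : V → Fin n => (Finset.univ.image F).card)]
  · refine Finset.sum_le_sum fun j _ => ?_
    rw [Finset.sum_congr rfl (g := fun _ => (1 / (n : ℝ)) ^ j)]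
    · rw [Finset.sum_const, nsmul_eq_mul]
      have := count_im (n := n) (V := V) j
      have h2 : ((Finset.univ.filter (fun F : V → Fin n => (Finset.univ.image F).card = j)).card : ℝ)
        ≤ (n : ℝ) ^ j * (j : ℝ) ^ Fintype.card V := by exact_mod_cast this
      calc _ ≤ (n : ℝ) ^ j * (j : ℝ) ^ Fintype.card V * (1 / (n : ℝ)) ^ j := by
            gcongr
        _ = _ := by rw [one_div_pow]; field_simp
    · intro F hF
      rw [(Finset.mem_filter.1 hF).2]
  · intro F _
    rw [Finset.mem_range, Nat.lt_succ_iff]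
    exact Finset.card_image_le

/-- tuples of different cycles in `G` -/
noncomputable def TS (L : I → ℕ) [∀ i, NeZero (L i)] (G : SimpleGraph (Fin n)) :
    Finset ((Σ i, ZMod (L i)) → Fin n) :=
  Finset.univ.filter (fun F => GoodF F ∧ ∀ e ∈ EE F, e ∈ G.edgeSet)

lemma sum_TS (d : ℕ) :
    ∑ G ∈ Rg d n, ((TS L G).card : ℝ) =
      ∑ F ∈ Finset.univ.filter (fun F : (Σ i, ZMod (L i)) → Fin n => GoodF F),
        ((RH d n (EE F)).card : ℝ) := by
  have h1 : ∀ G : SimpleGraph (Fin n), ((TS L G).card : ℝ) =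
      ∑ F ∈ Finset.univ.filter (fun F : (Σ i, ZMod (L i)) → Fin n => GoodF F),
        (if (∀ e ∈ EE F, e ∈ G.edgeSet) then (1 : ℝ) else 0) := by
    intro G
    rw [Finset.sum_boole, Finset.filter_filter]
    rfl
  simp_rw [h1]
  rw [Finset.sum_comm]
  refine Finset.sum_congr rfl fun F _ => ?_
  rw [Finset.sum_boole]
  congr 2
  ext G
  simp [mem_RH]

set_option maxHeartbeats 1000000 in
lemma tuple_asymp (d : ℕ) (hd : 1 ≤ d) (L : I → ℕ) [∀ i, NeZero (L i)] (hL : ∀ i, 3 ≤ L i) :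
    ∃ K : ℝ, ∃ n0 : ℕ, ∀ n, n0 ≤ n → 0 < (Rg d n).card →
      |avg (Rg d n) (fun G => ((TS L G).card : ℝ)) -
        (n.descFactorial (Fintype.card (Σ i, ZMod (L i))) : ℝ) /
          (n : ℝ) ^ (Fintype.card (Σ i, ZMod (L i))) *
          ((d : ℝ) - 1) ^ (Fintype.card (Σ i, ZMod (L i)))| ≤ K / n := by
  set m := Fintype.card (Σ i, ZMod (L i)) with hm
  obtain ⟨K, hK0, n0, hn01, hK⟩ := count_asymp d m
  refine ⟨K + (2 * d) ^ m * ∑ j ∈ Finset.range (m + 1), (j : ℝ) ^ m,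
    max n0 (4 * m + 4 * (d + 2)), ?_⟩
  intro n hn hR
  have hn1 : n0 ≤ n := le_trans (le_max_left _ _) hn
  have hn2 : 4 * m + 4 * (d + 2) ≤ n := le_trans (le_max_right _ _) hn
  have hnp : (0 : ℝ) < n := by
    have : 0 < n := by omega
    exact_mod_cast this
  have hn1' : (1 : ℝ) ≤ n := by
    have : 1 ≤ n := by omega
    exact_mod_cast this
  have hdp : (1 : ℝ) ≤ d := by exact_mod_cast hd
  set R : ℝ := (((Rg d n).card : ℕ) : ℝ) with hRdef
  have hRp : 0 < R := by rw [hRdef]; exact_mod_cast hR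
  have hsplit : avg (Rg d n) (fun G => ((TS L G).card : ℝ)) =
      (∑ F ∈ Finset.univ.filter (fun F : (Σ i, ZMod (L i)) → Fin n => Function.Injective F),
        ((RH d n (EE F)).card : ℝ)) / R +
      (∑ F ∈ Finset.univ.filter (fun F : (Σ i, ZMod (L i)) → Fin n => GoodF F ∧
        ¬ Function.Injective F), ((RH d n (EE F)).card : ℝ)) / R := by
    unfold avg
    rw [sum_TS, ← add_div]
    congr 1
    rw [← Finset.sum_filter_add_sum_filter_not _ (fun F => Function.Injective F)]
    rw [Finset.filter_filter, Finset.filter_filter]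
    congr 2
    ext F
    simp only [Finset.mem_filter, Finset.mem_univ, true_and]
    exact ⟨fun h => h.2, fun h => ⟨good_of_inj h, h⟩⟩
  have hcardinj : (Finset.univ.filter
      (fun F : (Σ i, ZMod (L i)) → Fin n => Function.Injective F)).card = n.descFactorial m := by
    have : Fintype.card ((Σ i, ZMod (L i)) ↪ Fin n) = n.descFactorial m := by
      rw [Fintype.card_embedding_eq, Fintype.card_fin]
    rw [← this, ← Fintype.card_subtype]
    exact Fintype.card_congr (Equiv.subtypeInjectiveEquivEmbedding _ _)
  have hA : |(∑ F ∈ Finset.univ.filter (fun F : (Σ i, ZMod (L i)) → Fin n => Function.Injective F),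
        ((RH d n (EE F)).card : ℝ)) / R - (n.descFactorial m : ℝ) / (n : ℝ) ^ m *
          ((d : ℝ) - 1) ^ m| ≤ K / n := by
    have e1 : ∀ F ∈ Finset.univ.filter
        (fun F : (Σ i, ZMod (L i)) → Fin n => Function.Injective F),
        |((RH d n (EE F)).card : ℝ) / R - ((d : ℝ) - 1) ^ m / (n : ℝ) ^ m|
          ≤ K / n * (1 / (n : ℝ) ^ m) := by
      intro F hF
      have hF := (Finset.mem_filter.1 hF).2
      have h := hK n hn1 (EE F) (card_EE_inj hL hF) (not_diag hL (good_of_inj hF))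
      rw [prod_EE_inj d hL hF] at h
      have hdf : ((d.descFactorial 2 : ℕ) : ℝ) = d * ((d : ℝ) - 1) := by
        simp [Nat.descFactorial, Nat.cast_sub hd]; ring
      push_cast at h
      rw [hdf, ← hm] at h
      have hp : (0 : ℝ) < (d * n) ^ m * R := by positivity
      have hdm : (1 : ℝ) ≤ (d : ℝ) ^ m := one_le_pow₀ hdp
      have heq : ((RH d n (EE F)).card : ℝ) / R - ((d : ℝ) - 1) ^ m / (n : ℝ) ^ m =
          (((RH d n (EE F)).card : ℝ) * (d * n) ^ m - (d * ((d : ℝ) - 1)) ^ m * R) /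
            ((d * n) ^ m * R) := by
        rw [mul_pow, mul_pow]
        field_simp
      rw [heq, abs_div, abs_of_pos hp, div_le_iff₀ hp]
      refine h.trans ?_
      have : K / n * (1 / (n : ℝ) ^ m) * ((d * n) ^ m * R) = K / n * R * (d : ℝ) ^ m := by
        rw [mul_pow]; field_simp
      rw [this]
      have : 0 ≤ K / n * R := by positivity
      nlinarith
    have e2 : (∑ F ∈ Finset.univ.filter
        (fun F : (Σ i, ZMod (L i)) → Fin n => Function.Injective F),
        ((RH d n (EE F)).card : ℝ)) / R - (n.descFactorial m : ℝ) / (n : ℝ) ^ m *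
          ((d : ℝ) - 1) ^ m = ∑ F ∈ Finset.univ.filter
        (fun F : (Σ i, ZMod (L i)) → Fin n => Function.Injective F),
        (((RH d n (EE F)).card : ℝ) / R - ((d : ℝ) - 1) ^ m / (n : ℝ) ^ m) := by
      rw [Finset.sum_sub_distrib, Finset.sum_const, hcardinj, nsmul_eq_mul, Finset.sum_div]
      ring
    rw [e2]
    refine (Finset.abs_sum_le_sum_abs _ _).trans ((Finset.sum_le_sum e1).trans ?_)
    rw [Finset.sum_const, hcardinj, nsmul_eq_mul]
    have h3 : (n.descFactorial m : ℝ) ≤ (n : ℝ) ^ m := by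
      exact_mod_cast Nat.descFactorial_le_pow n m
    have h4 : 0 ≤ K / n := by positivity
    calc (n.descFactorial m : ℝ) * (K / n * (1 / (n : ℝ) ^ m))
        ≤ (n : ℝ) ^ m * (K / n * (1 / (n : ℝ) ^ m)) := by gcongr
      _ = K / n := by field_simp
  have hB : (∑ F ∈ Finset.univ.filter (fun F : (Σ i, ZMod (L i)) → Fin n => GoodF F ∧
        ¬ Function.Injective F), ((RH d n (EE F)).card : ℝ)) / R ≤
        (2 * d) ^ m * (∑ j ∈ Finset.range (m + 1), (j : ℝ) ^ m) / n := by
    rw [Finset.sum_div]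
    have e1 : ∀ F ∈ Finset.univ.filter (fun F : (Σ i, ZMod (L i)) → Fin n => GoodF F ∧
        ¬ Function.Injective F), ((RH d n (EE F)).card : ℝ) / R ≤
        (2 * d) ^ m / n * (1 / (n : ℝ)) ^ (Finset.univ.image F).card := by
      intro F hF
      obtain ⟨hg, hi⟩ := (Finset.mem_filter.1 hF).2
      have hu := union_bound (d := d) m hn2 ∅ (EE F) (by simp)
        (by rw [Finset.card_empty, zero_add]; exact card_EE_le hL hg)
      have h0 : RH d n ∅ = Rg d n := by ext G; simp [mem_RH]
      rw [Finset.empty_union, h0] at hu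
      rw [div_le_iff₀ hRp]
      refine hu.trans ?_
      gcongr
      rw [div_pow, div_mul_eq_mul_div, mul_div_assoc]
      have a1 : (2 * (d : ℝ)) ^ (EE F).card ≤ (2 * d) ^ m :=
        pow_le_pow_right₀ (by linarith) (card_EE_le hL hg)
      have a2 : (n : ℝ) ^ ((Finset.univ.image F).card + 1) ≤ (n : ℝ) ^ (EE F).card :=
        pow_le_pow_right₀ hn1' (card_EE_non hL hg hi)
      calc (2 * (d : ℝ)) ^ (EE F).card / (n : ℝ) ^ (EE F).card
          ≤ (2 * d) ^ m / (n : ℝ) ^ ((Finset.univ.image F).card + 1) := by gcongr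
        _ = _ := by rw [pow_succ, one_div_pow]; field_simp
    refine (Finset.sum_le_sum e1).trans ?_
    rw [← Finset.mul_sum]
    have e3 : ∑ F ∈ Finset.univ.filter (fun F : (Σ i, ZMod (L i)) → Fin n => GoodF F ∧
        ¬ Function.Injective F), (1 / (n : ℝ)) ^ (Finset.univ.image F).card ≤
        ∑ F : (Σ i, ZMod (L i)) → Fin n, (1 / (n : ℝ)) ^ (Finset.univ.image F).card :=
      Finset.sum_le_sum_of_subset_of_nonneg (Finset.subset_univ _) (fun _ _ _ => by positivity)
    have e4 := sum_non (n := n) (by omega) (V := Σ i, ZMod (L i))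
    calc _ ≤ (2 * (d : ℝ)) ^ m / n * ∑ j ∈ Finset.range (m + 1), (j : ℝ) ^ m := by
          gcongr; exact e3.trans e4
      _ = _ := by ring
  have hB0 : 0 ≤ (∑ F ∈ Finset.univ.filter (fun F : (Σ i, ZMod (L i)) → Fin n => GoodF F ∧
        ¬ Function.Injective F), ((RH d n (EE F)).card : ℝ)) / R :=
    div_nonneg (Finset.sum_nonneg fun _ _ => Nat.cast_nonneg _) hRp.le
  rw [hsplit, add_div]
  rw [abs_le] at hA ⊢
  constructor <;> linarith [hA.1, hA.2]

end tuples
end RCP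


namespace RCP
section final
open scoped Classical

lemma TS_card {n : ℕ} {P : Type} [Fintype P] (ℓ : P → ℕ) [∀ p, NeZero (ℓ p)]
    (hinj : Function.Injective ℓ) (h3 : ∀ p, 3 ≤ ℓ p) (r : P → ℕ) (G : SimpleGraph (Fin n)) :
    (TS (fun i : Σ p, Fin (r p) => ℓ i.1) G).card =
      ∏ p, ((2 * ℓ p) ^ r p * (cycleCount G (ℓ p)).descFactorial (r p)) := by
  simp_rw [← fun p => tuple_card G (ℓ p) (r p) (h3 p)]
  rw [← Fintype.card_piFinset]
  refine Finset.card_nbij' (fun F => fun p k t => F ⟨⟨p, k⟩, t⟩)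
    (fun h => fun v => h v.1.1 v.1.2 v.2) ?_ ?_ ?_ ?_
  · intro F hF
    simp only [TS, Finset.coe_filter, Finset.mem_univ, true_and, Set.mem_ofPred_eq] at hF
    obtain ⟨⟨h1, h2⟩, h3⟩ := hF
    simp only [Finset.mem_coe, Fintype.mem_piFinset, Finset.mem_filter, Finset.mem_univ, true_and]
    intro p
    refine ⟨fun k => mem_CycS.2 ⟨h1 ⟨p, k⟩, fun e he => h3 e (mem_EE.2 ⟨⟨p, k⟩, he⟩)⟩, ?_⟩
    intro k k' hk
    have := h2 (a₁ := ⟨p, k⟩) (a₂ := ⟨p, k'⟩) hk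
    simpa using this
  · intro h hh
    simp only [Finset.mem_coe, Fintype.mem_piFinset, Finset.mem_filter, Finset.mem_univ,
      true_and] at hh
    simp only [TS, Finset.coe_filter, Finset.mem_univ, true_and, Set.mem_ofPred_eq]
    refine ⟨⟨fun i => (mem_CycS.1 ((hh i.1).1 i.2)).1, ?_⟩, ?_⟩
    · rintro ⟨p, k⟩ ⟨q, k'⟩ he
      have he' : eset (h p k) = eset (h q k') := he
      have hc := congrArg Finset.card he'
      rw [card_eset (h3 p) (mem_CycS.1 ((hh p).1 k)).1,
        card_eset (h3 q) (mem_CycS.1 ((hh q).1 k')).1] at hc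
      have := hinj hc
      subst this
      have := (hh p).2 he'
      rw [this]
    · intro e he
      obtain ⟨i, hi⟩ := mem_EE.1 he
      exact (mem_CycS.1 ((hh i.1).1 i.2)).2 e hi
  · intro F _
    rfl
  · intro h _
    rfl

lemma desc_tendsto (m : ℕ) :
    Tendsto (fun n : ℕ => (n.descFactorial m : ℝ) / (n : ℝ) ^ m) atTop (𝓝 1) := by
  induction m with
  | zero => simp
  | succ m ih =>
    have h1 : Tendsto (fun n : ℕ => 1 - (m : ℝ) / (n : ℝ)) atTop (𝓝 (1 - 0)) :=
      tendsto_const_nhds.sub (tendsto_const_div_atTop_nhds_zero_nat _)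
    have h2 := ih.mul h1
    rw [sub_zero, mul_one] at h2
    refine h2.congr' ?_
    filter_upwards [eventually_ge_atTop (m + 1)] with n hn
    have hn0 : (n : ℝ) ≠ 0 := by
      have : n ≠ 0 := by omega
      exact_mod_cast this
    rw [Nat.descFactorial_succ, pow_succ]
    push_cast [Nat.cast_sub (show m ≤ n by omega)]
    field_simp

lemma moments {P : Type} [Fintype P] (ℓ : P → ℕ) [∀ p, NeZero (ℓ p)]
    (hinj : Function.Injective ℓ) (h3 : ∀ p, 3 ≤ ℓ p) (d : ℕ) (hd : 1 ≤ d) (l : Filter ℕ)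
    (hl : l ≤ atTop) (hne : ∀ᶠ n in l, 0 < (Rg d n).card) (r : P → ℕ) :
    Tendsto (fun n => avg (Rg d n) (fun G => ∏ p, ((cycleCount G (ℓ p)).choose (r p) : ℝ))) l
      (𝓝 (∏ p, ((((d : ℝ) - 1) ^ ℓ p / (2 * ℓ p)) ^ r p / ((r p).factorial : ℝ)))) := by
  obtain ⟨K, n0, hK⟩ := tuple_asymp d hd (fun i : Σ p, Fin (r p) => ℓ i.1) (fun i => h3 i.1)
  have hm : Fintype.card (Σ i : (Σ p, Fin (r p)), ZMod (ℓ i.1)) = ∑ p, r p * ℓ p := by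
    simp [Fintype.card_sigma, Fintype.sum_sigma, ZMod.card]
  rw [hm] at hK
  set m := ∑ p, r p * ℓ p with hmdef
  have h1 : Tendsto (fun n => avg (Rg d n)
      (fun G => ((TS (fun i : Σ p, Fin (r p) => ℓ i.1) G).card : ℝ))) l
      (𝓝 (((d : ℝ) - 1) ^ m)) := by
    have a1 : Tendsto (fun n : ℕ => (n.descFactorial m : ℝ) / (n : ℝ) ^ m * ((d : ℝ) - 1) ^ m) l
        (𝓝 (((d : ℝ) - 1) ^ m)) := by
      simpa using ((desc_tendsto m).mono_left hl).mul_const (((d : ℝ) - 1) ^ m)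
    have a2 : Tendsto (fun n : ℕ => avg (Rg d n)
      (fun G => ((TS (fun i : Σ p, Fin (r p) => ℓ i.1) G).card : ℝ)) -
        (n.descFactorial m : ℝ) / (n : ℝ) ^ m * ((d : ℝ) - 1) ^ m) l (𝓝 0) := by
      refine squeeze_zero_norm' ?_ ((tendsto_const_div_atTop_nhds_zero_nat K).mono_left hl)
      filter_upwards [hl (eventually_ge_atTop n0), hne] with n hn hR
      exact hK n hn hR
    simpa using a2.add a1
  set c : ℝ := ∏ p, ((2 * (ℓ p : ℝ)) ^ r p * ((r p).factorial : ℝ)) with hc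
  have hc0 : c ≠ 0 := by
    rw [hc, Finset.prod_ne_zero_iff]
    intro p _
    have : (ℓ p : ℝ) ≠ 0 := by exact_mod_cast NeZero.ne (ℓ p)
    positivity
  have h2 := h1.div_const c
  have e1 : ((d : ℝ) - 1) ^ m / c =
      ∏ p, ((((d : ℝ) - 1) ^ ℓ p / (2 * ℓ p)) ^ r p / ((r p).factorial : ℝ)) := by
    rw [hmdef, ← Finset.prod_pow_eq_pow_sum, hc, ← Finset.prod_div_distrib]
    refine Finset.prod_congr rfl fun p _ => ?_
    rw [div_pow, div_div, mul_comm (r p), pow_mul]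
  rw [e1] at h2
  refine h2.congr fun n => ?_
  have e2 : ∀ G : SimpleGraph (Fin n),
      ((TS (fun i : Σ p, Fin (r p) => ℓ i.1) G).card : ℝ) =
        c * ∏ p, ((cycleCount G (ℓ p)).choose (r p) : ℝ) := by
    intro G
    rw [TS_card ℓ hinj h3, hc, ← Finset.prod_mul_distrib]
    push_cast
    refine Finset.prod_congr rfl fun p _ => ?_
    rw [Nat.descFactorial_eq_factorial_mul_choose]
    push_cast
    ring
  unfold avg
  simp_rw [e2]
  rw [← Finset.mul_sum]
  field_simp

lemma exists_circ (n d : ℕ) [NeZero n] (T : Finset ℕ) (h1 : ∀ x ∈ T, 0 < x ∧ x < n)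
    (h2 : ∀ x ∈ T, n - x ∈ T) (hT : T.card = d) :
    ∃ G : SimpleGraph (ZMod n), ∀ v, (G.neighborSet v).ncard = d := by
  refine ⟨{ Adj := fun u v => (v - u).val ∈ T, symm := ⟨?_⟩, loopless := ⟨?_⟩ }, ?_⟩
  · intro u v h
    have hne : v - u ≠ 0 := by
      intro h0
      rw [h0] at h
      have := (h1 _ h).1
      simp at this
    rw [← neg_sub, ZMod.neg_val, if_neg hne]
    exact h2 _ h
  · intro u h
    have := (h1 _ h).1
    simp at this
  · intro v
    rw [← hT, ← Set.ncard_coe_finset T]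
    refine Set.ncard_congr (fun u _ => (u - v).val) ?_ ?_ ?_
    · intro u hu
      exact hu
    · intro a b _ _ h
      have := ZMod.val_injective n h
      simpa using this
    · intro x hx
      have hx2 := (h1 x hx).2
      refine ⟨v + (x : ZMod n), ?_, ?_⟩
      · change (v + (x : ZMod n) - v).val ∈ T
        rw [add_sub_cancel_left, ZMod.val_natCast_of_lt hx2]
        exact hx
      · rw [add_sub_cancel_left, ZMod.val_natCast_of_lt hx2]

lemma exists_T (n d : ℕ) (hn : d < n) (he : Even (d * n)) :
    ∃ T : Finset ℕ, (∀ x ∈ T, 0 < x ∧ x < n) ∧ (∀ x ∈ T, n - x ∈ T) ∧ T.card = d := by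
  rcases Nat.even_or_odd d with ⟨k, hk⟩ | ⟨k, hk⟩
  · refine ⟨Finset.Icc 1 k ∪ Finset.Icc (n - k) (n - 1), ?_, ?_, ?_⟩
    · intro x hx
      simp only [Finset.mem_union, Finset.mem_Icc] at hx
      omega
    · intro x hx
      simp only [Finset.mem_union, Finset.mem_Icc] at hx ⊢
      omega
    · rw [Finset.card_union_of_disjoint]
      · simp only [Nat.card_Icc]
        omega
      · rw [Finset.disjoint_left]
        intro x hx
        simp only [Finset.mem_Icc] at hx ⊢
        omega
  · have hne : Even n := by
      rw [Nat.even_mul] at he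
      rcases he with h | h
      · exact absurd h (by rw [Nat.not_even_iff_odd]; exact ⟨k, hk⟩)
      · exact h
    obtain ⟨j, hj⟩ := hne
    refine ⟨insert j (Finset.Icc 1 k ∪ Finset.Icc (n - k) (n - 1)), ?_, ?_, ?_⟩
    · intro x hx
      simp only [Finset.mem_insert, Finset.mem_union, Finset.mem_Icc] at hx
      omega
    · intro x hx
      simp only [Finset.mem_insert, Finset.mem_union, Finset.mem_Icc] at hx ⊢
      omega
    · rw [Finset.card_insert_of_notMem, Finset.card_union_of_disjoint]
      · simp only [Nat.card_Icc]
        omega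
      · rw [Finset.disjoint_left]
        intro x hx
        simp only [Finset.mem_Icc] at hx ⊢
        omega
      · simp only [Finset.mem_union, Finset.mem_Icc]
        omega

lemma Rg_pos (n d : ℕ) (hn : d < n) (he : Even (d * n)) : 0 < (Rg d n).card := by
  obtain ⟨T, h1, h2, h3⟩ := exists_T n d hn he
  have : NeZero n := ⟨by omega⟩
  obtain ⟨G, hG⟩ := exists_circ n d T h1 h2 h3
  rw [Finset.card_pos]
  cases n with
  | zero => omega
  | succ k => exact ⟨G, mem_Rg.2 hG⟩

lemma regularPr_eq (d n : ℕ) (E : Set (SimpleGraph (Fin n))) (g : SimpleGraph (Fin n) → ℝ)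
    (hg : ∀ G, g G = if G ∈ E then 1 else 0) : regularPr d n E = avg (Rg d n) g := by
  unfold regularPr avg
  have h1 : regularGraphs d n = ((Rg d n : Finset _) : Set (SimpleGraph (Fin n))) := by
    simp [Rg]
  have h2 : regularGraphs d n ∩ E = (((Rg d n).filter (fun G => G ∈ E) : Finset _) :
      Set (SimpleGraph (Fin n))) := by
    ext G; simp [h1]
  rw [h2, h1, Set.ncard_coe_finset, Set.ncard_coe_finset]
  simp_rw [hg]
  rw [Finset.sum_boole]

lemma poisson_good (d : ℕ) (hd : 2 ≤ d) (C : ℕ) (u : ℕ → ℕ → ℝ) (mu : ℕ → ℝ)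
    (hu : ∀ p ∈ Finset.Icc 3 C, Good (((d : ℝ) - 1) ^ p / (2 * p)) (u p) (mu p))
    (E : ∀ n, Set (SimpleGraph (Fin n)))
    (hE : ∀ n (G : SimpleGraph (Fin n)), ∏ p ∈ Finset.Icc 3 C, u p (cycleCount G p) =
      if G ∈ E n then 1 else 0) :
    Tendsto (fun n => regularPr d n (E n)) (atTop ⊓ Filter.principal {n | Even (d * n)})
      (𝓝 (∏ p ∈ Finset.Icc 3 C, mu p)) := by
  have hmem : ∀ p : Finset.Icc 3 C, 3 ≤ (p : ℕ) := fun p => (Finset.mem_Icc.1 p.2).1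
  haveI : ∀ p : Finset.Icc 3 C, NeZero (p : ℕ) := fun p => ⟨by have := hmem p; omega⟩
  have key := mom_good (ι := Finset.Icc 3 C) (fun p => ((d : ℝ) - 1) ^ (p : ℕ) / (2 * (p : ℕ)))
    (fun n => Rg d n) (fun n G p => cycleCount G (p : ℕ))
    (atTop ⊓ Filter.principal {n | Even (d * n)})
    (moments (fun p : Finset.Icc 3 C => (p : ℕ)) Subtype.val_injective hmem d (by omega)
      _ inf_le_left ?_) (fun p => u p) (fun p => mu p) (fun p => hu p p.2)
  · rw [Finset.prod_coe_sort (Finset.Icc 3 C) mu] at key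
    refine key.congr fun n => ?_
    symm
    apply regularPr_eq
    intro G
    rw [← hE n G]
    exact Finset.prod_coe_sort (Finset.Icc 3 C) (fun p => u p (cycleCount G p))
  · rw [Filter.eventually_inf_principal]
    filter_upwards [eventually_gt_atTop d] with n hn he
    exact Rg_pos n d hn he

end final
end RCP

/-- In the uniformly random `d`-regular graph on `n` vertices (`d ≥ 2` fixed, along
`n` with `dn` even), the numbers of cycles of the lengths `3 ≤ ℓ ≤ C` converge
jointly in distribution to independent Poisson variables with means `(d-1)^ℓ/(2ℓ)`.
Consequently, for the random 2-regular graph, the probability that the graph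
contains a cycle of length `ℓ` for each `ℓ ∈ A` and none for each `ℓ ∈ B` tends to
`∏_{ℓ∈A}(1 - e^{-1/(2ℓ)}) · ∏_{ℓ∈B} e^{-1/(2ℓ)}`. -/
theorem firstOrderComplexity.regular_cycles_poisson (d : ℕ) (hd : 2 ≤ d) (C : ℕ) :
    (∀ a : ℕ → ℕ,
      Tendsto
        (fun n => regularPr d n {G | ∀ ℓ, 3 ≤ ℓ → ℓ ≤ C → cycleCount G ℓ = a ℓ})
        (atTop ⊓ Filter.principal {n | Even (d * n)})
        (𝓝 (∏ ℓ ∈ Finset.Icc 3 C,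
          Real.exp (-(((d : ℝ) - 1) ^ ℓ / (2 * ℓ)))
            * (((d : ℝ) - 1) ^ ℓ / (2 * ℓ)) ^ (a ℓ) / (Nat.factorial (a ℓ))))) ∧
    (∀ A B : Finset ℕ, ↑A ⊆ Set.Icc 3 C → ↑B ⊆ Set.Icc 3 C → Disjoint A B →
      Tendsto
        (fun n => regularPr 2 n
          {G | (∀ ℓ ∈ A, cycleCount G ℓ ≠ 0) ∧ (∀ ℓ ∈ B, cycleCount G ℓ = 0)})
        atTop
        (𝓝 ((∏ ℓ ∈ A, (1 - Real.exp (-(1 / (2 * (ℓ : ℝ))))))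
              * ∏ ℓ ∈ B, Real.exp (-(1 / (2 * (ℓ : ℝ))))))) := by
  classical
  constructor
  · intro a
    refine RCP.poisson_good d hd C (fun p x => if x = a p then 1 else 0) _
      (fun p _ => RCP.good_indicator _ (a p)) _ ?_
    intro n G
    rw [Finset.prod_ite_zero]
    simp only [Finset.prod_const_one, Finset.mem_Icc, Set.mem_ofPred_eq, and_imp]
    congr
  · intro A B hA hB hAB
    have hA' : A ⊆ Finset.Icc 3 C := fun x hx => by simpa using hA hx
    have hB' : B ⊆ Finset.Icc 3 C := fun x hx => by simpa using hB hx
    have hdisj : ∀ x ∈ A, x ∉ B := fun x hx => Finset.disjoint_left.1 hAB hx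
    have hprod : ∀ f g : ℕ → ℝ, ∏ p ∈ Finset.Icc 3 C, (if p ∈ A then f p else
        if p ∈ B then g p else 1) = (∏ p ∈ A, f p) * ∏ p ∈ B, g p := by
      intro f g
      have : ∀ p, (if p ∈ A then f p else if p ∈ B then g p else 1) =
          (if p ∈ A then f p else 1) * (if p ∈ B then g p else 1) := by
        intro p
        by_cases h1 : p ∈ A
        · simp [h1, hdisj p h1]
        · simp [h1]
      simp_rw [this]
      rw [Finset.prod_mul_distrib, Finset.prod_ite_mem, Finset.prod_ite_mem,
        Finset.inter_eq_right.2 hA', Finset.inter_eq_right.2 hB']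
    have hf : (atTop : Filter ℕ) ⊓ Filter.principal {n | Even (2 * n)} = atTop := by
      have : {n : ℕ | Even (2 * n)} = Set.univ := by
        ext n; simp
      rw [this, Filter.principal_univ, inf_top_eq]
    have key := RCP.poisson_good 2 le_rfl C
      (fun p x => if p ∈ A then 1 - (if x = 0 then 1 else 0) else
        if p ∈ B then (if x = 0 then 1 else 0) else 1)
      (fun p => if p ∈ A then 1 - Real.exp (-(1 / (2 * (p : ℝ)))) else
        if p ∈ B then Real.exp (-(1 / (2 * (p : ℝ)))) else 1) ?_
      (fun n => {G | (∀ ℓ ∈ A, cycleCount G ℓ ≠ 0) ∧ (∀ ℓ ∈ B, cycleCount G ℓ = 0)}) ?_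
    · rw [hf, hprod] at key
      exact key
    · intro p _
      have e : (((2 : ℕ) : ℝ) - 1) ^ p / (2 * p) = 1 / (2 * (p : ℝ)) := by norm_num
      rw [e]
      have h0 := RCP.good_indicator (1 / (2 * (p : ℝ))) 0
      simp only [pow_zero, mul_one, Nat.factorial_zero, Nat.cast_one, div_one] at h0
      by_cases h1 : p ∈ A
      · simp only [h1, if_true]
        exact RCP.good_compl _ _ _ (fun x => by split_ifs <;> norm_num) h0
      · by_cases h2 : p ∈ B
        · simp only [h1, h2, if_true, if_false]
          exact h0
        · simp only [h1, h2, if_false]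
          exact RCP.good_one _
    · intro n G
      have := hprod (fun p => 1 - (if cycleCount G p = 0 then 1 else 0))
        (fun p => if cycleCount G p = 0 then 1 else 0)
      refine this.trans ?_
      have e : ∀ p, (1 - (if cycleCount G p = 0 then 1 else 0) : ℝ) =
        if cycleCount G p ≠ 0 then 1 else 0 := by
        intro p; by_cases h : cycleCount G p = 0 <;> simp [h]
      simp_rw [e]
      rw [Finset.prod_ite_zero, Finset.prod_ite_zero]
      simp only [Finset.prod_const_one, Set.mem_ofPred_eq]
      split_ifs <;> simp_all
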